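/- Let A ⊂ S⁴ be a compact connected simply connected smooth 4-dimensional submanifold with boundary, and let M be a connected component of ∂A. Then S⁴ \ M has exactly two connected components; and if A' is the closure of the component containing the interior of A, then A' is simply connected. -/

import Mathlib

/-- The 4-sphere, as the unit sphere in `ℝ⁵`. -/
abbrev Sph4 : Type := Metric.sphere (0 : EuclideanSpace ℝ (Fin 5)) 1

section
open Set Filter Topology Metric MeasureTheory

namespace Sub10

set_option linter.unusedSectionVars false

section Brouwer

variable {E : Type*} [NormedAddCommGroup E] [InnerProductSpace ℝ E] [FiniteDimensional ℝ E]

/-- `det (1 + t L)` is a polynomial in `t` of degree at most `dim E`. -/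
lemma det_poly (L : E →L[ℝ] E) : ∃ p : Polynomial ℝ, p.natDegree ≤ Module.finrank ℝ E ∧
    ∀ t : ℝ, p.eval t = (ContinuousLinearMap.id ℝ E + t • L).det := by
  classical
  let b := Module.finBasis ℝ E
  let A := LinearMap.toMatrix b b (L : E →ₗ[ℝ] E)
  refine ⟨((Polynomial.X : Polynomial ℝ) • A.map Polynomial.C + (1 : Matrix (Fin (Module.finrank ℝ E)) (Fin (Module.finrank ℝ E)) ℝ).map Polynomial.C).det, ?_, ?_⟩
  · have := Polynomial.natDegree_det_X_add_C_le A 1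
    simpa using this
  · intro t
    have h1 : (ContinuousLinearMap.id ℝ E + t • L).det =
        (1 + t • A).det := by
      change LinearMap.det ((ContinuousLinearMap.id ℝ E + t • L : E →L[ℝ] E) : E →ₗ[ℝ] E) = _
      rw [← LinearMap.det_toMatrix b]
      congr 1
      simp [A, map_add]
    rw [h1, ← Polynomial.coe_evalRingHom, RingHom.map_det]
    congr 1
    ext i j
    by_cases hij : i = j
    · subst hij
      simp [A]
      ring
    · simp [A, hij]
      ring

lemma phi_poly (x h y : E) (R : ℝ) (m : ℕ) : ∃ p : Polynomial ℝ, p.natDegree ≤ 2 * m ∧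
    ∀ t : ℝ, p.eval t = (1 - ‖x + t • h - y‖ ^ 2 / R ^ 2) ^ m := by
  let q : Polynomial ℝ := Polynomial.C (1 - ‖x - y‖ ^ 2 / R ^ 2)
    + Polynomial.C (-(2 * inner ℝ (x - y) h) / R ^ 2) * Polynomial.X
    + Polynomial.C (-‖h‖ ^ 2 / R ^ 2) * Polynomial.X ^ 2
  refine ⟨q ^ m, ?_, ?_⟩
  · have : q.natDegree ≤ 2 := by
      simp only [q]
      compute_degree
    calc (q ^ m).natDegree ≤ m * q.natDegree := Polynomial.natDegree_pow_le
      _ ≤ m * 2 := Nat.mul_le_mul_left _ this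
      _ = 2 * m := by ring
  · intro t
    have : x + t • h - y = (x - y) + t • h := by abel
    rw [this, norm_add_sq_real, inner_smul_right, norm_smul]
    simp only [q, Polynomial.eval_pow, Polynomial.eval_add, Polynomial.eval_mul,
      Polynomial.eval_C, Polynomial.eval_X]
    congr 1
    have : (‖t‖ * ‖h‖) ^ 2 = t ^ 2 * ‖h‖ ^ 2 := by
      rw [mul_pow, Real.norm_eq_abs, sq_abs]
    rw [this]
    ring

/-- Interpolation weights expressing the value at `1` through values at small points. -/
lemma interp (N : ℕ) (t₀ : ℝ) (ht₀ : 0 < t₀) : ∃ (v c : Fin (N + 1) → ℝ),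
    (∀ i, 0 < v i ∧ v i ≤ t₀) ∧
    ∀ p : Polynomial ℝ, p.natDegree ≤ N → p.eval 1 = ∑ i, c i * p.eval (v i) := by
  classical
  let v : Fin (N + 1) → ℝ := fun i => t₀ / ((i : ℝ) + 1)
  have hv : Function.Injective v := by
    intro i j hij
    have hi : (0 : ℝ) < (i : ℝ) + 1 := by positivity
    have hj : (0 : ℝ) < (j : ℝ) + 1 := by positivity
    have : t₀ * ((j : ℝ) + 1) = t₀ * ((i : ℝ) + 1) := by
      have := hij
      simp only [v] at this
      rwa [div_eq_div_iff hi.ne' hj.ne'] at this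
    have := mul_left_cancel₀ ht₀.ne' this
    have h3 : ((j : ℕ) : ℝ) = ((i : ℕ) : ℝ) := by linarith
    exact Fin.ext (by exact_mod_cast h3.symm)
  refine ⟨v, fun i => (Lagrange.basis Finset.univ v i).eval 1, ?_, ?_⟩
  · intro i
    refine ⟨by positivity, ?_⟩
    exact div_le_self ht₀.le (by simp)
  · intro p hp
    have h := Lagrange.eq_interpolate (s := Finset.univ) (v := v) (f := p) hv.injOn (by
      refine (Polynomial.degree_le_of_natDegree_le hp).trans_lt ?_
      simp
      exact_mod_cast Nat.lt_succ_self N)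
    conv_lhs => rw [h]
    rw [Lagrange.interpolate_apply, Polynomial.eval_finsetSum]
    refine Finset.sum_congr rfl fun i _ => ?_
    rw [Polynomial.eval_mul, Polynomial.eval_C, mul_comm]

variable [MeasurableSpace E] [BorelSpace E]

/-- For small `t`, change of variables along `x ↦ x + t h x`. -/
lemma small_change {h : E → E} (hh : ContDiff ℝ 1 h) {R : ℝ}
    (hR : ∀ x, R ≤ ‖x‖ → h x = 0) :
    ∃ t₀ : ℝ, 0 < t₀ ∧ ∀ t : ℝ, 0 < t → t ≤ t₀ → ∀ φ : E → ℝ,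
      ∫ x in closedBall (0 : E) R, (ContinuousLinearMap.id ℝ E + t • fderiv ℝ h x).det *
        φ (x + t • h x) = ∫ x in closedBall (0 : E) R, φ x := by
  have hcs : HasCompactSupport h := by
    refine HasCompactSupport.of_support_subset_isCompact (isCompact_closedBall (0 : E) R) ?_
    intro x hx
    by_contra hc
    apply hx
    apply hR
    simp at hc
    exact hc.le
  obtain ⟨C, hC⟩ := ContDiff.lipschitzWith_of_hasCompactSupport hcs hh one_ne_zero
  have hdet : ∀ᶠ L : E →L[ℝ] E in 𝓝 0, 0 < (ContinuousLinearMap.id ℝ E + L).det := by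
    have hc : Continuous fun L : E →L[ℝ] E => (ContinuousLinearMap.id ℝ E + L).det :=
      ContinuousLinearMap.continuous_det.comp (continuous_const.add continuous_id)
    have h0 : 0 < (ContinuousLinearMap.id ℝ E + (0 : E →L[ℝ] E)).det := by
      rw [add_zero]
      change 0 < LinearMap.det (LinearMap.id : E →ₗ[ℝ] E)
      simp
    exact hc.continuousAt.eventually (lt_mem_nhds h0)
  obtain ⟨δ, hδ, hδ'⟩ := Metric.eventually_nhds_iff.1 hdet
  have hCp : (0 : ℝ) < C + 1 := by positivity
  refine ⟨min (δ / 2) (1 / 2) / (C + 1), by positivity, ?_⟩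
  intro t ht htt φ
  have htC : t * (C + 1) ≤ min (δ / 2) (1 / 2) := by
    rwa [le_div_iff₀ hCp] at htt
  have htC1 : t * C < δ := by
    have := htC.trans (min_le_left _ _)
    nlinarith
  have htC2 : t * C ≤ 1 / 2 := by
    have := htC.trans (min_le_right _ _)
    nlinarith
  set f : E → E := fun x => x + t • h x with hf
  have hlip : ∀ x y, ‖h x - h y‖ ≤ C * ‖x - y‖ := fun x y => by
    simpa [dist_eq_norm] using hC.dist_le_mul x y
  have happ : ApproximatesLinearOn f ((ContinuousLinearEquiv.refl ℝ E : E ≃L[ℝ] E) : E →L[ℝ] E)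
      univ (1 / 2 : NNReal) := by
    intro x _ y _
    have : f x - f y - (x - y) = t • (h x - h y) := by
      simp only [hf, smul_sub]; abel
    simp only [ContinuousLinearEquiv.coe_refl, ContinuousLinearMap.coe_id', id_eq]
    rw [this, norm_smul, Real.norm_eq_abs, abs_of_pos ht]
    have := hlip x y
    have h3 : (((1 / 2 : NNReal)) : ℝ) = 1 / 2 := by norm_num
    rw [h3]
    calc t * ‖h x - h y‖ ≤ t * (C * ‖x - y‖) := by gcongr
      _ = (t * C) * ‖x - y‖ := by ring
      _ ≤ 1 / 2 * ‖x - y‖ := by gcongr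
  have hcond : Subsingleton E ∨ (1 / 2 : NNReal) <
      ‖((ContinuousLinearEquiv.refl ℝ E).symm : E →L[ℝ] E)‖₊⁻¹ := by
    rcases subsingleton_or_nontrivial E with hE | hE
    · exact Or.inl hE
    · right
      have : ‖((ContinuousLinearEquiv.refl ℝ E).symm : E →L[ℝ] E)‖₊ = 1 := by
        ext
        simp
      rw [this, inv_one]
      norm_num [← NNReal.coe_lt_coe]
  have hsurj := happ.surjective hcond
  have hinj : Function.Injective f := by
    intro x y hxy
    have := happ.injective hcond (a₁ := ⟨x, mem_univ _⟩) (a₂ := ⟨y, mem_univ _⟩) hxy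
    simpa using this
  have hfix : ∀ x, R ≤ ‖x‖ → f x = x := fun x hx => by simp [hf, hR x hx]
  have himg : f '' closedBall (0 : E) R = closedBall (0 : E) R := by
    ext y
    constructor
    · rintro ⟨x, hx, rfl⟩
      by_contra hc
      simp only [mem_closedBall, dist_zero_right, not_le] at hc hx
      have := hinj (hfix _ hc.le)
      rw [this] at hc
      linarith
    · intro hy
      obtain ⟨x, rfl⟩ := hsurj y
      refine ⟨x, ?_, rfl⟩
      by_contra hc
      simp only [mem_closedBall, dist_zero_right, not_le] at hc hy
      rw [hfix x hc.le] at hy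
      linarith
  have hder : ∀ x ∈ closedBall (0 : E) R, HasFDerivWithinAt f
      (ContinuousLinearMap.id ℝ E + t • fderiv ℝ h x) (closedBall (0 : E) R) x := by
    intro x _
    have h1 : HasFDerivAt h (fderiv ℝ h x) x :=
      (hh.differentiable one_ne_zero x).hasFDerivAt
    exact ((hasFDerivAt_id x).add (h1.const_smul t)).hasFDerivWithinAt
  have hcv := integral_image_eq_integral_abs_det_fderiv_smul volume
    (measurableSet_closedBall : MeasurableSet (closedBall (0 : E) R)) hder hinj.injOn φ
  rw [himg] at hcv
  rw [hcv]
  refine setIntegral_congr_fun measurableSet_closedBall fun x _ => ?_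
  have hpos : 0 < (ContinuousLinearMap.id ℝ E + t • fderiv ℝ h x).det := by
    apply hδ'
    rw [dist_zero_right, norm_smul, Real.norm_eq_abs, abs_of_pos ht]
    have : ‖fderiv ℝ h x‖ ≤ C := norm_fderiv_le_of_lipschitz ℝ hC
    calc t * ‖fderiv ℝ h x‖ ≤ t * C := by gcongr
      _ < δ := htC1
  simp only [hf, abs_of_pos hpos, smul_eq_mul]

lemma change_one {h : E → E} (hh : ContDiff ℝ 1 h) {R : ℝ}
    (hR : ∀ x, R ≤ ‖x‖ → h x = 0) (y : E) (S : ℝ) (m : ℕ) :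
    ∫ x in closedBall (0 : E) R, (ContinuousLinearMap.id ℝ E + fderiv ℝ h x).det *
        (1 - ‖x + h x - y‖ ^ 2 / S ^ 2) ^ m
      = ∫ x in closedBall (0 : E) R, (1 - ‖x - y‖ ^ 2 / S ^ 2) ^ m := by
  obtain ⟨t₀, ht₀, hsm⟩ := small_change hh hR
  obtain ⟨v, c, hv, hc⟩ := interp (Module.finrank ℝ E + 2 * m) t₀ ht₀
  have hcont : Continuous (fderiv ℝ h) := hh.continuous_fderiv one_ne_zero
  have key : ∀ x, (ContinuousLinearMap.id ℝ E + fderiv ℝ h x).det *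
        (1 - ‖x + h x - y‖ ^ 2 / S ^ 2) ^ m = ∑ i, c i *
        ((ContinuousLinearMap.id ℝ E + v i • fderiv ℝ h x).det *
        (1 - ‖x + v i • h x - y‖ ^ 2 / S ^ 2) ^ m) := by
    intro x
    obtain ⟨p, hp, hp'⟩ := det_poly (fderiv ℝ h x)
    obtain ⟨q, hq, hq'⟩ := phi_poly x (h x) y S m
    have := hc (p * q) (Polynomial.natDegree_mul_le.trans (add_le_add hp hq))
    simp only [Polynomial.eval_mul, hp', hq', one_smul] at this
    exact this
  have hsum : ∑ i, c i = 1 := by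
    have := hc 1 (by simp)
    simpa using this.symm
  simp_rw [key]
  rw [integral_finsetSum]
  · simp_rw [integral_const_mul]
    have : ∀ i, ∫ x in closedBall (0 : E) R,
        (ContinuousLinearMap.id ℝ E + v i • fderiv ℝ h x).det *
        (1 - ‖x + v i • h x - y‖ ^ 2 / S ^ 2) ^ m =
        ∫ x in closedBall (0 : E) R, (1 - ‖x - y‖ ^ 2 / S ^ 2) ^ m :=
      fun i => hsm (v i) (hv i).1 (hv i).2 (fun z => (1 - ‖z - y‖ ^ 2 / S ^ 2) ^ m)
    simp_rw [this]
    rw [← Finset.sum_mul, hsum, one_mul]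
  · intro i _
    have hc1 : Continuous fun x => c i *
        ((ContinuousLinearMap.id ℝ E + v i • fderiv ℝ h x).det *
        (1 - ‖x + v i • h x - y‖ ^ 2 / S ^ 2) ^ m) := by
      have h1 : Continuous fun x => (ContinuousLinearMap.id ℝ E + v i • fderiv ℝ h x).det :=
        ContinuousLinearMap.continuous_det.comp (by fun_prop)
      have h2 := hh.continuous
      fun_prop
    exact hc1.continuousOn.integrableOn_compact (isCompact_closedBall _ _)

lemma surj_smooth {h : E → E} (hh : ContDiff ℝ 1 h) {R : ℝ}
    (hR : ∀ x, R ≤ ‖x‖ → h x = 0) (y : E) : ∃ x, x + h x = y := by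
  by_contra hcon
  push Not at hcon
  have hy : ‖y‖ < R := by
    by_contra hc
    exact hcon y (by simp [hR y (not_lt.1 hc)])
  have hR0 : 0 < R := (norm_nonneg y).trans_lt hy
  have hcont : Continuous (fderiv ℝ h) := hh.continuous_fderiv one_ne_zero
  have hK := isCompact_closedBall (0 : E) R
  have hKn : (closedBall (0 : E) R).Nonempty := ⟨0, by simp [hR0.le]⟩
  have hhc := hh.continuous
  -- a lower bound of the distance to `y`
  obtain ⟨x₁, -, hx₁⟩ := hK.exists_isMinOn hKn
    (f := fun x => ‖x + h x - y‖) (by fun_prop)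
  obtain ⟨x₂, -, hx₂⟩ := hK.exists_isMaxOn hKn
    (f := fun x => ‖x + h x - y‖) (by fun_prop)
  have hdc : Continuous fun x => |(ContinuousLinearMap.id ℝ E + fderiv ℝ h x).det| :=
    (ContinuousLinearMap.continuous_det.comp (continuous_const.add hcont)).abs
  obtain ⟨x₃, -, hx₃⟩ := hK.exists_isMaxOn hKn
    (f := fun x => |(ContinuousLinearMap.id ℝ E + fderiv ℝ h x).det|) hdc.continuousOn
  set ε₀ := ‖x₁ + h x₁ - y‖ with hε₀
  have hε₀p : 0 < ε₀ := by
    rw [hε₀, norm_pos_iff, sub_ne_zero]; exact hcon x₁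
  set ε := min ε₀ (R - ‖y‖) with hε
  have hεp : 0 < ε := lt_min hε₀p (by linarith)
  set S := ‖x₂ + h x₂ - y‖ + 2 * R + ε with hS
  have hSp : 0 < S := by positivity
  set D := |(ContinuousLinearMap.id ℝ E + fderiv ℝ h x₃).det| with hD
  set V := volume.real (closedBall (0 : E) R) with hV
  set W := volume.real (closedBall y (ε / 2)) with hW
  have hWp : 0 < W := by
    rw [hW, Measure.real]
    refine ENNReal.toReal_pos ?_ ?_
    · exact (Metric.measure_closedBall_pos volume _ (by positivity)).ne'
    · exact (isCompact_closedBall y (ε / 2)).measure_lt_top.ne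
  set a := 1 - ε ^ 2 / S ^ 2 with ha
  set b := 1 - (ε / 2) ^ 2 / S ^ 2 with hb
  have hεS : ε ≤ S := by
    rw [hS]; have := norm_nonneg (x₂ + h x₂ - y); linarith
  have ha0 : 0 ≤ a := by
    rw [ha, sub_nonneg, div_le_one (by positivity)]
    gcongr
  have hab : a < b := by
    rw [ha, hb]
    have : (ε / 2) ^ 2 / S ^ 2 < ε ^ 2 / S ^ 2 := by
      gcongr
      linarith
    linarith
  have hb0 : 0 < b := ha0.trans_lt hab
  -- the main estimate
  have main : ∀ m : ℕ, b ^ m * W ≤ D * a ^ m * V := by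
    intro m
    have hch := change_one hh hR y S m
    have h1 : b ^ m * W ≤ ∫ x in closedBall (0 : E) R, (1 - ‖x - y‖ ^ 2 / S ^ 2) ^ m := by
      have hsub : closedBall y (ε / 2) ⊆ closedBall (0 : E) R := by
        intro x hx
        simp only [mem_closedBall, dist_eq_norm, sub_zero] at hx ⊢
        have h4 : ε ≤ R - ‖y‖ := min_le_right _ _
        calc ‖x‖ = ‖(x - y) + y‖ := by simp
          _ ≤ ‖x - y‖ + ‖y‖ := norm_add_le _ _
          _ ≤ R := by linarith
      have hi : Continuous fun x : E => (1 - ‖x - y‖ ^ 2 / S ^ 2) ^ m := by fun_prop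
      calc b ^ m * W = ∫ x in closedBall y (ε / 2), b ^ m := by
            rw [setIntegral_const, smul_eq_mul, mul_comm]
        _ ≤ ∫ x in closedBall y (ε / 2), (1 - ‖x - y‖ ^ 2 / S ^ 2) ^ m := by
            refine setIntegral_mono_on ?_ ?_ measurableSet_closedBall ?_
            · exact continuous_const.continuousOn.integrableOn_compact (isCompact_closedBall _ _)
            · exact hi.continuousOn.integrableOn_compact (isCompact_closedBall _ _)
            · intro x hx
              simp only [mem_closedBall, dist_eq_norm] at hx
              rw [hb] at hb0 ⊢
              gcongr
        _ ≤ ∫ x in closedBall (0 : E) R, (1 - ‖x - y‖ ^ 2 / S ^ 2) ^ m := by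
            refine setIntegral_mono_set ?_ ?_ ?_
            · exact hi.continuousOn.integrableOn_compact (isCompact_closedBall _ _)
            · refine (ae_restrict_iff' measurableSet_closedBall).2 (Eventually.of_forall ?_)
              intro x hx
              simp only [mem_closedBall, dist_zero_right] at hx
              apply pow_nonneg
              rw [sub_nonneg, div_le_one (by positivity)]
              have : ‖x - y‖ ≤ S := by
                have h5 := norm_sub_le x y
                have := norm_nonneg (x₂ + h x₂ - y)
                linarith
              gcongr
            · exact hsub.eventuallyLE
    have h2 : ∫ x in closedBall (0 : E) R, (ContinuousLinearMap.id ℝ E + fderiv ℝ h x).det *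
        (1 - ‖x + h x - y‖ ^ 2 / S ^ 2) ^ m ≤ D * a ^ m * V := by
      refine (le_abs_self _).trans ?_
      rw [← Real.norm_eq_abs]
      refine norm_setIntegral_le_of_norm_le_const hK.measure_lt_top fun x hx => ?_
      rw [norm_mul, norm_pow, Real.norm_eq_abs, Real.norm_eq_abs]
      have h6 : ‖x + h x - y‖ ≤ ‖x₂ + h x₂ - y‖ := hx₂ hx
      have h7 : ε ≤ ‖x + h x - y‖ := (min_le_left _ _).trans (hx₁ hx)
      have h8 : |(ContinuousLinearMap.id ℝ E + fderiv ℝ h x).det| ≤ D := hx₃ hx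
      have h9 : 0 ≤ 1 - ‖x + h x - y‖ ^ 2 / S ^ 2 := by
        rw [sub_nonneg, div_le_one (by positivity)]
        have : ‖x + h x - y‖ ≤ S := by linarith
        gcongr
      rw [abs_of_nonneg h9]
      have h10 : 1 - ‖x + h x - y‖ ^ 2 / S ^ 2 ≤ a := by
        rw [ha]; gcongr
      gcongr
    linarith
  have hlim : Tendsto (fun m : ℕ => D * V * (a / b) ^ m) atTop (𝓝 (D * V * 0)) := by
    refine Tendsto.const_mul _ (tendsto_pow_atTop_nhds_zero_of_lt_one (by positivity) ?_)
    rwa [div_lt_one hb0]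
  rw [mul_zero] at hlim
  obtain ⟨m, hm⟩ := (hlim.eventually (gt_mem_nhds hWp)).exists
  have h1 := main m
  have hbm : 0 < b ^ m := by positivity
  rw [div_pow, ← mul_div_assoc, div_lt_iff₀ hbm] at hm
  nlinarith

end Brouwer

section Surj

variable {E : Type*} [NormedAddCommGroup E] [InnerProductSpace ℝ E] [FiniteDimensional ℝ E]

/-- A continuous self-map of Euclidean space which is the identity outside a ball is onto. -/
theorem surj_of_id_outside {g : E → E} (hg : Continuous g) {R : ℝ}
    (hRnn : 0 ≤ R) (hR : ∀ x, R ≤ ‖x‖ → g x = x) (y : E) : ∃ x, g x = y := by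
  borelize E
  set h : E → E := fun x => g x - x with hh
  have hhc : Continuous h := hg.sub continuous_id
  have hh0 : ∀ x, R ≤ ‖x‖ → h x = 0 := fun x hx => by simp [hh, hR x hx]
  have hcs : HasCompactSupport h := by
    refine HasCompactSupport.of_support_subset_isCompact (isCompact_closedBall (0 : E) R) ?_
    intro x hx
    by_contra hc
    apply hx
    apply hh0
    simp at hc
    exact hc.le
  have huc := hcs.uniformContinuous_of_continuous hhc
  -- approximate solutions
  have happ : ∀ η > 0, ∃ x, ‖x‖ ≤ R + 1 + ‖y‖ ∧ ‖g x - y‖ ≤ η := by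
    intro η hη
    obtain ⟨δ, hδ, hfδ⟩ := Metric.uniformContinuous_iff.mp huc η hη
    obtain ⟨k, hk, hk'⟩ := hhc.exists_contDiff_dist_le_of_forall_mem_ball_dist_le
      (lt_min hδ one_pos)
    have hk0 : ∀ x, R + 1 ≤ ‖x‖ → k x = 0 := by
      intro x hx
      have h1 : h x = 0 := hh0 x (by linarith)
      have := hk' x 0 (fun z hz => by
        have hz1 : dist z x < 1 := (mem_ball.1 hz).trans_le (min_le_right _ _)
        have : R ≤ ‖z‖ := by
          rw [dist_comm, dist_eq_norm] at hz1
          have := norm_sub_norm_le x z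
          linarith
        rw [h1, hh0 z this, dist_self])
      rw [h1] at this
      exact dist_le_zero.1 this
    obtain ⟨x, hx⟩ := surj_smooth (hk.of_le (by exact_mod_cast le_top)) hk0 y
    refine ⟨x, ?_, ?_⟩
    · by_contra hc
      push Not at hc
      have := hk0 x (by have := norm_nonneg y; linarith)
      rw [this, add_zero] at hx
      rw [hx] at hc
      have := norm_nonneg y
      linarith
    · have := hk' x η (fun z hz => (hfδ ((mem_ball.1 hz).trans_le (min_le_left _ _))).le)
      have h3 : g x - y = h x - k x := by
        rw [← hx]; simp only [hh]; abel
      rw [h3, ← dist_eq_norm, dist_comm]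
      exact this
  have hK := isCompact_closedBall (0 : E) (R + 1 + ‖y‖)
  obtain ⟨x₀, hx₀, hmin⟩ := hK.exists_isMinOn
    (by obtain ⟨x, hx, -⟩ := happ 1 one_pos; exact ⟨x, by simpa using hx⟩)
    (f := fun x => ‖g x - y‖) (by fun_prop)
  refine ⟨x₀, ?_⟩
  by_contra hne
  have hpos : 0 < ‖g x₀ - y‖ := norm_pos_iff.2 (sub_ne_zero.2 hne)
  obtain ⟨x, hx, hx'⟩ := happ (‖g x₀ - y‖ / 2) (by positivity)
  have : ‖g x₀ - y‖ ≤ ‖g x - y‖ := hmin (by simpa using hx)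
  linarith

end Surj

end Sub10

namespace Sub10

section InvDom

variable {E : Type*} [NormedAddCommGroup E] [InnerProductSpace ℝ E] [FiniteDimensional ℝ E]

lemma approx_smooth {G : E → E} (hG : Continuous G) (R : ℝ) {η : ℝ} (hη : 0 < η) :
    ∃ P : E → E, ContDiff ℝ 1 P ∧ ∀ x, ‖x‖ ≤ R → ‖P x - G x‖ ≤ η := by
  have hu : UniformContinuousOn G (closedBall 0 (R + 1)) :=
    (isCompact_closedBall (0 : E) (R + 1)).uniformContinuousOn_of_continuous hG.continuousOn
  obtain ⟨δ, hδ, hd⟩ := Metric.uniformContinuousOn_iff.1 hu η hη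
  obtain ⟨k, hk, hk'⟩ := hG.exists_contDiff_dist_le_of_forall_mem_ball_dist_le
      (lt_min hδ one_pos)
  refine ⟨k, hk.of_le (by exact_mod_cast le_top), fun x hx => ?_⟩
  rw [← dist_eq_norm]
  refine hk' x η fun z hz => ?_
  have h1 : dist z x < δ := (mem_ball.1 hz).trans_le (min_le_left _ _)
  have h2 : dist z x < 1 := (mem_ball.1 hz).trans_le (min_le_right _ _)
  refine (hd z ?_ x ?_ h1).le
  · rw [mem_closedBall, dist_zero_right]
    rw [dist_eq_norm] at h2
    have := norm_sub_norm_le z x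
    linarith
  · rw [mem_closedBall, dist_zero_right]
    linarith

/-- A continuous map on the closed unit ball which is close to the identity has a zero. -/
lemma zero_of_near_id {k : E → E} (hk : ContinuousOn k (closedBall 0 1))
    (hn : ∀ x, ‖x‖ ≤ 1 → ‖k x - x‖ ≤ 1 / 4) : ∃ x, ‖x‖ ≤ 1 ∧ k x = 0 := by
  classical
  let χ : ℝ → ℝ := fun r => max 0 (min 1 (2 - 2 * r))
  have hχc : Continuous χ := by fun_prop
  have hχ1 : ∀ r, r ≤ 1 / 2 → χ r = 1 := fun r hr => by
    simp only [χ]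
    rw [min_eq_left (by linarith), max_eq_right (by norm_num)]
  have hχ0 : ∀ r, 1 ≤ r → χ r = 0 := fun r hr => by
    simp only [χ]
    rw [max_eq_left]
    exact (min_le_right _ _).trans (by linarith)
  have hχn : ∀ r, 0 ≤ χ r := fun r => le_max_left _ _
  have hχl : ∀ r, χ r ≤ 1 := fun r => max_le (by norm_num) (min_le_left _ _)
  let g : E → E := fun x => if ‖x‖ ≤ 1 then x + χ ‖x‖ • (k x - x) else x
  have hg : Continuous g := by
    refine continuous_if_le continuous_norm continuous_const ?_ continuousOn_id ?_
    · have hk2 : ContinuousOn k {x : E | ‖x‖ ≤ 1} := hk.mono fun x hx => by simpa using hx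
      have : Continuous fun x : E => χ ‖x‖ := hχc.comp continuous_norm
      exact continuousOn_id.add (this.continuousOn.smul (hk2.sub continuousOn_id))
    · intro x hx
      rw [hχ0 _ hx.ge]
      simp
  have hgo : ∀ x, 1 ≤ ‖x‖ → g x = x := by
    intro x hx
    simp only [g]
    split_ifs
    · rw [hχ0 _ hx]; simp
    · rfl
  obtain ⟨x, hx⟩ := surj_of_id_outside hg zero_le_one hgo 0
  by_cases h1 : ‖x‖ ≤ 1
  · simp only [g, if_pos h1] at hx
    have h2 : ‖x‖ ≤ 1 / 4 := by
      have : x = -(χ ‖x‖ • (k x - x)) := eq_neg_of_add_eq_zero_left hx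
      calc ‖x‖ = ‖χ ‖x‖ • (k x - x)‖ := by
            conv_lhs => rw [this]
            rw [norm_neg]
        _ = χ ‖x‖ * ‖k x - x‖ := by rw [norm_smul, Real.norm_eq_abs, abs_of_nonneg (hχn _)]
        _ ≤ 1 * (1 / 4) := mul_le_mul (hχl _) (hn x h1) (norm_nonneg _) (by norm_num)
        _ = 1 / 4 := by norm_num
    rw [hχ1 _ (by linarith)] at hx
    exact ⟨x, h1, by simpa using hx⟩
  · simp only [g, if_neg h1] at hx
    rw [hx] at h1
    simp at h1

lemma inv_dom_ball {f : E → E} (hf : ContinuousOn f (closedBall 0 1))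
    (hinj : InjOn f (closedBall 0 1)) : f '' closedBall 0 1 ∈ 𝓝 (f 0) := by
  classical
  borelize E
  by_contra hnot
  set K : Set E := closedBall 0 1 with hK
  have hKc : IsCompact K := isCompact_closedBall _ _
  have h0K : (0 : E) ∈ K := by simp [hK]
  have hcl : IsClosed (f '' K) := (hKc.image_of_continuousOn hf).isClosed
  -- the inverse
  have hemb : IsClosedEmbedding (K.domRestrict f) := by
    have : CompactSpace K := isCompact_iff_compactSpace.1 hKc
    exact Continuous.isClosedEmbedding hf.domRestrict (injOn_iff_injective.1 hinj)
  obtain ⟨G, hG⟩ := ContinuousMap.exists_extension hemb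
    (⟨fun x => (x : E), continuous_subtype_val⟩ : C(K, E))
  have hGf : ∀ x ∈ K, G (f x) = x := fun x hx => by
    have := DFunLike.congr_fun hG ⟨x, hx⟩
    exact this
  have hGc : Continuous G := G.continuous
  have hG0 : G (f 0) = 0 := hGf 0 h0K
  obtain ⟨ε, hε, hGε⟩ : ∃ ε > 0, ∀ y, ‖y - f 0‖ ≤ 2 * ε → ‖G y‖ ≤ 1 / 16 := by
    have := Metric.continuousAt_iff.1 (hGc.continuousAt (x := f 0)) (1 / 16) (by norm_num)
    obtain ⟨δ, hδ, h⟩ := this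
    refine ⟨δ / 4, by positivity, fun y hy => ?_⟩
    have := h (x := y) (by rw [dist_eq_norm]; linarith)
    rw [hG0, dist_zero_right] at this
    exact this.le
  obtain ⟨c, hc, hcK⟩ : ∃ c, ‖c - f 0‖ < ε ∧ c ∉ f '' K := by
    by_contra hcon
    push Not at hcon
    apply hnot
    refine Filter.mem_of_superset (Metric.ball_mem_nhds (f 0) hε) fun y hy => hcon y ?_
    rwa [mem_ball, dist_eq_norm] at hy
  -- lower bound
  obtain ⟨δ₀, hδ₀, hlow⟩ : ∃ δ₀ > 0, ∀ y ∈ f '' K, ε ≤ ‖y - c‖ → δ₀ ≤ ‖G y‖ := by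
    have hS : IsCompact (f '' K ∩ {y | ε ≤ ‖y - c‖}) :=
      (hKc.image_of_continuousOn hf).inter_right
        (isClosed_le continuous_const (by fun_prop))
    rcases (f '' K ∩ {y | ε ≤ ‖y - c‖}).eq_empty_or_nonempty with he | hne
    · refine ⟨1, one_pos, fun y hy hy' => ?_⟩
      have : y ∈ (f '' K ∩ {y | ε ≤ ‖y - c‖}) := ⟨hy, hy'⟩
      rw [he] at this
      exact this.elim
    · obtain ⟨y₁, ⟨⟨x₁, hx₁, rfl⟩, hy₁⟩, hmin⟩ := hS.exists_isMinOn hne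
        (f := fun y => ‖G y‖) (by fun_prop)
      refine ⟨‖G (f x₁)‖, ?_, fun y hy hy' => hmin ⟨hy, hy'⟩⟩
      rw [hGf x₁ hx₁, gt_iff_lt, norm_pos_iff]
      rintro rfl
      have : ε ≤ ‖f 0 - c‖ := hy₁
      rw [norm_sub_rev] at this
      linarith
  set η := min (δ₀ / 4) (1 / 32) with hη
  have hηp : 0 < η := by positivity
  have hη1 : η ≤ δ₀ / 4 := min_le_left _ _
  have hη2 : η ≤ 1 / 32 := min_le_right _ _
  obtain ⟨R, hR⟩ : ∃ R, ∀ y, (y ∈ f '' K ∨ ‖y - c‖ = ε) → ‖y‖ ≤ R := by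
    obtain ⟨R₁, hR₁⟩ := (hKc.image_of_continuousOn hf).isBounded.exists_norm_le
    refine ⟨max R₁ (ε + ‖c‖), fun y hy => ?_⟩
    rcases hy with hy | hy
    · exact (hR₁ y hy).trans (le_max_left _ _)
    · refine le_trans ?_ (le_max_right _ _)
      calc ‖y‖ = ‖(y - c) + c‖ := by simp
        _ ≤ ‖y - c‖ + ‖c‖ := norm_add_le _ _
        _ = ε + ‖c‖ := by rw [hy]
  obtain ⟨P, hP, hPG⟩ := approx_smooth hGc R hηp
  obtain ⟨w, hw, hwP⟩ : ∃ w, ‖w‖ ≤ η ∧ w ∉ P '' sphere c ε := by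
    have hnull : volume (P '' sphere c ε) = 0 :=
      addHaar_image_eq_zero_of_differentiableOn_of_addHaar_eq_zero volume
        (hP.differentiable one_ne_zero).differentiableOn
        (Measure.addHaar_sphere_of_ne_zero volume c hε.ne')
    by_contra hcon
    push Not at hcon
    have hsub : closedBall (0 : E) η ⊆ P '' sphere c ε := fun w hw => hcon w (by simpa using hw)
    have := measure_mono_null hsub hnull
    exact (Metric.measure_closedBall_pos volume (0 : E) hηp).ne' this
  -- the perturbed map
  let pr : E → E := fun y => c + (max (ε / ‖y - c‖) 1) • (y - c)
  let Gt : E → E := fun y => P (pr y) - w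
  have hne : ∀ y ∈ f '' K, y - c ≠ 0 := fun y hy h => hcK (by rwa [← sub_eq_zero.1 h])
  have hprc : ContinuousOn pr (f '' K) := by
    have hd : ContinuousOn (fun y => ε / ‖y - c‖) (f '' K) := by
      refine continuousOn_const.div (by fun_prop) fun y hy => ?_
      exact norm_ne_zero_iff.2 (hne y hy)
    have hd2 : ContinuousOn (fun y => max (ε / ‖y - c‖) 1) (f '' K) :=
      (continuous_id.max continuous_const).comp_continuousOn hd
    exact continuousOn_const.add (hd2.smul (by fun_prop))
  have hpr1 : ∀ y, ε ≤ ‖y - c‖ → pr y = y := fun y hy => by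
    simp only [pr]
    rw [max_eq_right, one_smul]
    · abel
    · rw [div_le_one (hε.trans_le hy)]; exact hy
  have hpr2 : ∀ y ∈ f '' K, ‖y - c‖ < ε → ‖pr y - c‖ = ε := fun y hy hy' => by
    have hpos : 0 < ‖y - c‖ := norm_pos_iff.2 (hne y hy)
    simp only [pr]
    rw [max_eq_left, add_sub_cancel_left, norm_smul, Real.norm_eq_abs, abs_of_pos (by positivity),
      div_mul_cancel₀ _ hpos.ne']
    rw [le_div_iff₀ hpos]; linarith
  have hGtc : ContinuousOn Gt (f '' K) :=
    (hP.continuous.comp_continuousOn hprc).sub continuousOn_const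
  have hprop : ∀ y ∈ f '' K, Gt y ≠ 0 ∧ ‖Gt y - G y‖ ≤ 1 / 4 := by
    intro y hy
    by_cases hyc : ε ≤ ‖y - c‖
    · have h1 : ‖P y - G y‖ ≤ η := hPG y (hR y (Or.inl hy))
      have h2 : ‖Gt y - G y‖ ≤ 2 * η := by
        simp only [Gt, hpr1 y hyc]
        calc ‖P y - w - G y‖ = ‖(P y - G y) - w‖ := by congr 1; abel
          _ ≤ ‖P y - G y‖ + ‖w‖ := norm_sub_le _ _
          _ ≤ 2 * η := by linarith
      refine ⟨fun h0 => ?_, by linarith⟩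
      rw [h0, zero_sub, norm_neg] at h2
      have := hlow y hy hyc
      linarith
    · push Not at hyc
      have hz := hpr2 y hy hyc
      set z := pr y with hzdef
      have h1 : ‖P z - G z‖ ≤ η := hPG z (hR z (Or.inr hz))
      have hy0 : ‖G y‖ ≤ 1 / 16 := by
        refine hGε y ?_
        calc ‖y - f 0‖ = ‖(y - c) + (c - f 0)‖ := by congr 1; abel
          _ ≤ ‖y - c‖ + ‖c - f 0‖ := norm_add_le _ _
          _ ≤ 2 * ε := by linarith
      have hz0 : ‖G z‖ ≤ 1 / 16 := by
        refine hGε z ?_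
        calc ‖z - f 0‖ = ‖(z - c) + (c - f 0)‖ := by congr 1; abel
          _ ≤ ‖z - c‖ + ‖c - f 0‖ := norm_add_le _ _
          _ ≤ 2 * ε := by linarith
      constructor
      · intro h0
        apply hwP
        refine ⟨z, by rw [mem_sphere, dist_eq_norm]; exact hz, ?_⟩
        exact sub_eq_zero.1 h0
      · have : Gt y - G y = (P z - G z) - w + G z - G y := by
          simp only [Gt, ← hzdef]; abel
        rw [this]
        have i1 := norm_sub_le ((P z - G z) - w + G z) (G y)
        have i2 := norm_add_le ((P z - G z) - w) (G z)
        have i3 := norm_sub_le (P z - G z) w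
        linarith
  obtain ⟨x, hx, hx0⟩ := zero_of_near_id (k := fun x => Gt (f x))
    (hGtc.comp hf (mapsTo_image f K)) (fun x hx => by
      have hxK : x ∈ K := by simpa [hK] using hx
      have := (hprop (f x) ⟨x, hxK, rfl⟩).2
      rwa [hGf x hxK] at this)
  exact (hprop (f x) ⟨x, by simpa [hK] using hx, rfl⟩).1 hx0

/-- Invariance of domain. -/
theorem inv_dom {f : E → E} {V : Set E} (hV : IsOpen V) (hf : ContinuousOn f V)
    (hinj : InjOn f V) : IsOpen (f '' V) := by
  rw [isOpen_iff_mem_nhds]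
  rintro _ ⟨x, hx, rfl⟩
  obtain ⟨r, hr, hrV⟩ := Metric.nhds_basis_closedBall.mem_iff.1 (hV.mem_nhds hx)
  have hmaps : MapsTo (fun u : E => x + r • u) (closedBall 0 1) V := by
    intro u hu
    apply hrV
    simp only [mem_closedBall, dist_zero_right] at hu
    rw [mem_closedBall, dist_eq_norm, add_sub_cancel_left, norm_smul, Real.norm_eq_abs,
      abs_of_pos hr]
    nlinarith
  have h1 := inv_dom_ball (f := fun u => f (x + r • u))
    (hf.comp (by fun_prop) hmaps) (fun u hu v hv huv => by
      have := hinj (hmaps hu) (hmaps hv) huv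
      exact smul_right_injective E hr.ne' (add_left_cancel this))
  simp only [smul_zero, add_zero] at h1
  refine Filter.mem_of_superset h1 ?_
  rintro _ ⟨u, hu, rfl⟩
  exact ⟨_, hmaps hu, rfl⟩

end InvDom

end Sub10

namespace Sub10

section Homot

open unitInterval

variable {X : Type*} [TopologicalSpace X] {Y : Type*} [TopologicalSpace Y]

/-- classes of paths -/
abbrev PQ (x y : Y) := Path.Homotopic.Quotient x y

lemma sub_hom {S : Set X} (hS : SimplyConnectedSpace S) {x y : X} (p q : Path x y)
    (hp : ∀ t, p t ∈ S) (hq : ∀ t, q t ∈ S) : p.Homotopic q := by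
  have hx : x ∈ S := by simpa using hp 0
  have hy : y ∈ S := by simpa using hp 1
  let p' : Path (⟨x, hx⟩ : S) ⟨y, hy⟩ :=
    { toFun := fun t => ⟨p t, hp t⟩
      continuous_toFun := by fun_prop
      source' := by simp
      target' := by simp }
  let q' : Path (⟨x, hx⟩ : S) ⟨y, hy⟩ :=
    { toFun := fun t => ⟨q t, hq t⟩
      continuous_toFun := by fun_prop
      source' := by simp
      target' := by simp }
  have h := (SimplyConnectedSpace.paths_homotopic p' q').map ⟨Subtype.val, continuous_subtype_val⟩
  exact h

lemma square {F : I × I → Y} (hF : Continuous F) {x y z w : Y} (p : Path x y) (q : Path y w)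
    (r : Path x z) (s : Path z w) (hp : ∀ a, p a = F (a, 0)) (hq : ∀ a, q a = F (1, a))
    (hr : ∀ a, r a = F (0, a)) (hs : ∀ a, s a = F (a, 1)) :
    Path.Homotopic.Quotient.trans (.mk p) (.mk q)
      = Path.Homotopic.Quotient.trans (.mk r) (.mk s) := by
  have hx : x = F (0, 0) := by rw [← hp 0]; simp
  have hy : y = F (1, 0) := by rw [← hp 1]; simp
  have hz : z = F (0, 1) := by rw [← hr 1]; simp
  have hw : w = F (1, 1) := by rw [← hs 1]; simp
  subst hx hy hz hw
  let p0 : Path ((0, 0) : I × I) (1, 0) := ⟨⟨fun a => (a, 0), by fun_prop⟩, rfl, rfl⟩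
  let q0 : Path ((1, 0) : I × I) (1, 1) := ⟨⟨fun a => (1, a), by fun_prop⟩, rfl, rfl⟩
  let r0 : Path ((0, 0) : I × I) (0, 1) := ⟨⟨fun a => (0, a), by fun_prop⟩, rfl, rfl⟩
  let s0 : Path ((0, 1) : I × I) (1, 1) := ⟨⟨fun a => (a, 1), by fun_prop⟩, rfl, rfl⟩
  have e1 : p = p0.map hF := by ext a; exact hp a
  have e2 : q = q0.map hF := by ext a; exact hq a
  have e3 : r = r0.map hF := by ext a; exact hr a
  have e4 : s = s0.map hF := by ext a; exact hs a
  have : ContractibleSpace I :=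
    (convex_Icc (0 : ℝ) 1).contractibleSpace ⟨0, by simp⟩
  have : SimplyConnectedSpace (I × I) := inferInstance
  have h := (SimplyConnectedSpace.paths_homotopic (p0.trans q0) (r0.trans s0)).map ⟨F, hF⟩
  rw [e1, e2, e3, e4, ← Path.Homotopic.Quotient.mk_trans, ← Path.Homotopic.Quotient.mk_trans,
    ← Path.map_trans, ← Path.map_trans]
  exact Path.Homotopic.Quotient.eq.2 h

/-- products of classes -/
noncomputable def prodQ (g : ℕ → Y) (h : ∀ i, PQ (g i) (g (i + 1))) : ∀ n, PQ (g 0) (g n)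
  | 0 => .refl _
  | n + 1 => (prodQ g h n).trans (h n)

lemma prodQ_row (g g' : ℕ → Y) (h : ∀ i, PQ (g i) (g (i + 1))) (h' : ∀ i, PQ (g' i) (g' (i + 1)))
    (V : ∀ i, PQ (g i) (g' i)) (sq : ∀ i, (h i).trans (V (i + 1)) = (V i).trans (h' i)) (n : ℕ) :
    (prodQ g h n).trans (V n) = (V 0).trans (prodQ g' h' n) := by
  induction n with
  | zero => simp [prodQ]
  | succ n ih =>
    simp only [prodQ]
    rw [Path.Homotopic.Quotient.trans_assoc, sq, ← Path.Homotopic.Quotient.trans_assoc, ih,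
      Path.Homotopic.Quotient.trans_assoc]

lemma prodQ_grid (g : ℕ → ℕ → Y) (H : ∀ i j, PQ (g i j) (g (i + 1) j))
    (V : ∀ i j, PQ (g i j) (g i (j + 1)))
    (sq : ∀ i j, (H i j).trans (V (i + 1) j) = (V i j).trans (H i (j + 1))) (n m : ℕ) :
    (prodQ (fun i => g i 0) (fun i => H i 0) n).trans (prodQ (g n) (V n) m)
      = (prodQ (g 0) (V 0) m).trans (prodQ (fun i => g i m) (fun i => H i m) n) := by
  induction m with
  | zero => simp [prodQ]
  | succ m ih =>
    simp only [prodQ]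
    rw [← Path.Homotopic.Quotient.trans_assoc, ih, Path.Homotopic.Quotient.trans_assoc,
      Path.Homotopic.Quotient.trans_assoc]
    congr 1
    exact prodQ_row (fun i => g i m) (fun i => g i (m + 1)) (fun i => H i m)
      (fun i => H i (m + 1)) (fun i => V i m) (fun i => sq i m) n

lemma grid_final {a b c d x0 : Y} (p : Path a b) (q : Path b d) (r : Path a c) (s : Path c d)
    (h : Path.Homotopic.Quotient.trans (.mk p) (.mk q)
      = Path.Homotopic.Quotient.trans (.mk r) (.mk s))
    (hq : ∀ t, q t = x0) (hr : ∀ t, r t = x0) (hs : ∀ t, s t = x0)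
    (γ : Path x0 x0) (hγ : ∀ t, γ t = p t) : γ.Homotopic (Path.refl x0) := by
  have ha : x0 = a := by rw [← hr 0]; simp
  have hc : c = x0 := by rw [← hr 1]; simp
  have hb : b = x0 := by rw [← hq 0]; simp
  have hd : d = x0 := by rw [← hq 1]; simp
  subst hc hb hd
  subst ha
  have e1 : q = Path.refl _ := by ext t; simp [hq]
  have e2 : r = Path.refl _ := by ext t; simp [hr]
  have e3 : s = Path.refl _ := by ext t; simp [hs]
  have e4 : γ = p := by ext t; exact hγ t
  rw [e1, e2, e3] at h
  rw [← Path.Homotopic.Quotient.eq, e4]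
  simpa using h

lemma continuous_cc {Z : Type*} [TopologicalSpace Z] {f g h : Z → I} (hf : Continuous f)
    (hg : Continuous g) (hh : Continuous h) :
    Continuous fun z => Icc.convexComb (f z) (g z) (h z) :=
  Icc.continuous_convexComb_prod.comp (hf.prodMk (hg.prodMk hh))

lemma mk_subpath {x y : Y} (γ : Path x y) (a b c : I) :
    Path.Homotopic.Quotient.trans (.mk (γ.subpath a b)) (.mk (γ.subpath b c))
      = .mk (γ.subpath a c) := by
  rw [← Path.Homotopic.Quotient.mk_trans]
  exact Path.Homotopic.Quotient.eq.2 ⟨Path.Homotopy.subpathTransSubpath γ a b c⟩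

lemma prodQ_subpath {x y : Y} (γ : Path x y) (t : ℕ → I) (n : ℕ) :
    prodQ (fun i => γ (t i)) (fun i => .mk (γ.subpath (t i) (t (i + 1)))) n
      = .mk (γ.subpath (t 0) (t n)) := by
  induction n with
  | zero => simp [prodQ]
  | succ n ih => simp only [prodQ]; rw [ih, mk_subpath]

theorem sc_of_union {U : Bool → Set X} (hU : ∀ i, IsOpen (U i)) (hcov : ∀ x, ∃ i, x ∈ U i)
    (hsc : ∀ i, SimplyConnectedSpace (U i)) (hinn : IsPathConnected (⋂ i, U i)) :
    SimplyConnectedSpace X := by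
  obtain ⟨x0, hx0, hj⟩ := hinn
  have hx0' : ∀ i, x0 ∈ U i := fun i => mem_iInter.1 hx0 i
  have hc : ∀ x : X, ∃ c : PQ x0 x, ∀ i, x ∈ U i → ∀ p : Path x0 x, (∀ t, p t ∈ U i) →
      Path.Homotopic.Quotient.mk p = c := by
    intro x
    by_cases hx : x ∈ ⋂ i, U i
    · obtain ⟨q, hq⟩ := hj hx
      refine ⟨.mk q, fun i hi p hp => Path.Homotopic.Quotient.eq.2 ?_⟩
      exact sub_hom (hsc i) p q hp fun t => mem_iInter.1 (hq t) i
    · obtain ⟨i, hi⟩ := hcov x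
      have hpc : IsPathConnected (U i) := isPathConnected_iff_pathConnectedSpace.2 inferInstance
      obtain ⟨q, hq⟩ := hpc.joinedIn x0 (hx0' i) x hi
      refine ⟨.mk q, fun k hk p hp => Path.Homotopic.Quotient.eq.2 ?_⟩
      have : k = i := by
        by_contra hne
        apply hx
        rw [mem_iInter]
        intro l
        rcases Bool.eq_or_eq_not l i with h | h
        · exact h ▸ hi
        · have : k = !i := by cases k <;> cases i <;> simp_all
          rw [h, ← this]; exact hk
      subst this
      exact sub_hom (hsc k) p q hp hq
  choose c hc using hc
  have hpc : ∀ i, IsPathConnected (U i) :=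
    fun i => isPathConnected_iff_pathConnectedSpace.2 inferInstance
  have small : ∀ i (x y : X) (p : Path x y), (∀ t, p t ∈ U i) →
      (c x).trans (.mk p) = c y := by
    intro i x y p hp
    have hx : x ∈ U i := by simpa using hp 0
    have hy : y ∈ U i := by simpa using hp 1
    obtain ⟨q, hq⟩ := (hpc i).joinedIn x0 (hx0' i) x hx
    rw [← hc _ i hx q hq, ← Path.Homotopic.Quotient.mk_trans]
    refine hc _ i hy _ fun t => ?_
    rw [Path.trans_apply]
    split_ifs
    · exact hq _
    · exact hp _
  rw [simply_connected_iff_paths_homotopic']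
  refine ⟨?_, ?_⟩
  · have : Nonempty X := ⟨x0⟩
    have : ∀ x, Joined x0 x := fun x => by
      obtain ⟨i, hi⟩ := hcov x
      exact ((hpc i).joinedIn x0 (hx0' i) x hi).joined
    exact ⟨inferInstance, fun x y => (this x).symm.trans (this y)⟩
  · have key : ∀ {a b : X} (p : Path a b), (c a).trans (.mk p) = c b := by
      intro a b p
      obtain ⟨t, t0, tm, ⟨N, hN⟩, hcell⟩ :=
        exists_monotone_Icc_subset_open_cover_unitInterval (c := fun i => p ⁻¹' U i)
          (fun i => (hU i).preimage p.continuous)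
          (fun s _ => by obtain ⟨i, hi⟩ := hcov (p s); exact mem_iUnion.2 ⟨i, hi⟩)
      have h1 : ∀ n, (c (p (t 0))).trans (.mk (p.subpath (t 0) (t n))) = c (p (t n)) := by
        intro n
        induction n with
        | zero => simp
        | succ n ih =>
          rw [← mk_subpath p (t 0) (t n) (t (n + 1)), ← Path.Homotopic.Quotient.trans_assoc, ih]
          obtain ⟨i, hi⟩ := hcell n
          refine small i _ _ _ fun s => ?_
          refine hi ⟨?_, ?_⟩
          · exact Icc.le_convexComb (tm (Nat.le_succ n)) s
          · exact Icc.convexComb_le (tm (Nat.le_succ n)) s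
      have h2 := h1 N
      rw [hN N le_rfl, t0] at h2
      have : ∀ (a' b' : X) (ha : a' = a) (hb : b' = b) (q : Path a' b'), (∀ s, q s = p s) →
          (c a').trans (.mk q) = c b' → (c a).trans (.mk p) = c b := by
        rintro a' b' rfl rfl q hq h
        rw [← h]
        congr 2
        ext s; exact (hq s).symm
      refine this _ _ p.source p.target _ (fun s => ?_) h2
      simp [Path.subpath_zero_one]
    intro a b p q
    have h := (key p).trans (key q).symm
    rw [← Path.Homotopic.Quotient.eq]
    have h' := congrArg (fun z => (c a).symm.trans z) h
    simpa [← Path.Homotopic.Quotient.trans_assoc] using h'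

end Homot

end Sub10

namespace Sub10

section Grid

open unitInterval

variable {X : Type*} [TopologicalSpace X]

theorem sc_of_grid [hX : SimplyConnectedSpace X] {A A' O X2 : Set X} (hA : SimplyConnectedSpace A)
    (hA' : IsPathConnected A') (hAA' : A ⊆ A') (hO : IsOpen O) (hX2 : IsOpen X2)
    (hOA : O ⊆ A') (hcov : ∀ x, x ∈ O ∨ x ∈ X2) (hX2A : ∀ x ∈ A', x ∈ X2 → x ∈ A) :
    SimplyConnectedSpace A' := by
  classical
  have : PathConnectedSpace A' := isPathConnected_iff_pathConnectedSpace.1 hA'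
  obtain ⟨a0, ha0⟩ : A.Nonempty := by
    obtain ⟨a⟩ : Nonempty A := inferInstance
    exact ⟨a.1, a.2⟩
  set v : X → A' := fun x => if h : x ∈ A' then ⟨x, h⟩ else ⟨a0, hAA' ha0⟩ with hv
  have hv1 : ∀ x (h : x ∈ A'), v x = ⟨x, h⟩ := fun x h => by simp [hv, h]
  have hv1' : ∀ x (h : x ∈ A'), (v x : X) = x := fun x h => by simp [hv, h]
  have hv2 : ∀ x ∈ X2, (v x : X) ∈ A := by
    intro x hx
    by_cases h : x ∈ A'
    · rw [hv1' x h]; exact hX2A x h hx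
    · simp only [hv, dif_neg h]; exact ha0
  have hvc : ∀ {Z : Type} [TopologicalSpace Z] {f : Z → X}, Continuous f → (∀ z, f z ∈ A') →
      Continuous fun z => v (f z) := by
    intro Z _ f hf h
    have : (fun z => v (f z)) = fun z => (⟨f z, h z⟩ : A') := by
      funext z; exact hv1 _ _
    rw [this]; fun_prop
  set AY : Set A' := {y | (y : X) ∈ A} with hAY
  have hAYsc : SimplyConnectedSpace AY := by
    have e : AY ≃ₜ A :=
      { toFun := fun y => ⟨y.1.1, y.2⟩
        invFun := fun x => ⟨⟨x.1, hAA' x.2⟩, x.2⟩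
        left_inv := fun y => rfl
        right_inv := fun x => rfl
        continuous_toFun := by fun_prop
        continuous_invFun := by fun_prop }
    exact e.toHomotopyEquiv.simplyConnectedSpace
  have hAYpc : IsPathConnected AY := isPathConnected_iff_pathConnectedSpace.2 inferInstance
  have hα : ∀ u w : A', ∃ α : PQ u w, u ∈ AY → w ∈ AY → ∀ p : Path u w, (∀ t, p t ∈ AY) →
      Path.Homotopic.Quotient.mk p = α := by
    intro u w
    by_cases h : u ∈ AY ∧ w ∈ AY
    · obtain ⟨q, hq⟩ := hAYpc.joinedIn u h.1 w h.2
      exact ⟨.mk q, fun _ _ p hp => Path.Homotopic.Quotient.eq.2 (sub_hom hAYsc p q hp hq)⟩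
    · exact ⟨.mk (PathConnectedSpace.somePath u w), fun h1 h2 => absurd ⟨h1, h2⟩ h⟩
  choose α hα using hα
  have hαt : ∀ u w z, u ∈ AY → w ∈ AY → z ∈ AY → (α u w).trans (α w z) = α u z := by
    intro u w z hu hw hz
    obtain ⟨p, hp⟩ := hAYpc.joinedIn u hu w hw
    obtain ⟨q, hq⟩ := hAYpc.joinedIn w hw z hz
    rw [← hα u w hu hw p hp, ← hα w z hw hz q hq, ← Path.Homotopic.Quotient.mk_trans]
    refine hα u z hu hz _ fun t => ?_
    rw [Path.trans_apply]
    split_ifs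
    · exact hp _
    · exact hq _
  let lift : ∀ {x y : X} (p : Path x y), (∀ t, p t ∈ A') → Path (v x) (v y) :=
    fun {x y} p h => ⟨⟨fun t => v (p t), hvc p.continuous h⟩, by simp, by simp⟩
  let T : ∀ {x y : X} (p : Path x y), PQ (v x) (v y) := fun {x y} p =>
    if h : ∀ t, p t ∈ A' then .mk (lift p h) else α (v x) (v y)
  have T1 : ∀ {x y : X} (p : Path x y) (h : ∀ t, p t ∈ A'), T p = .mk (lift p h) :=
    fun p h => dif_pos h
  have T2 : ∀ {x y : X} (p : Path x y) (h : ∀ t, p t ∈ X2), T p = α (v x) (v y) := by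
    intro x y p h
    have hx : x ∈ X2 := by simpa using h 0
    have hy : y ∈ X2 := by simpa using h 1
    by_cases h' : ∀ t, p t ∈ A'
    · rw [T1 p h']
      exact hα _ _ (hv2 _ hx) (hv2 _ hy) _ fun t => hv2 _ (h t)
    · exact dif_neg h'
  have Tsq : ∀ {F : I × I → X} (_ : Continuous F) {x y z w : X} (p : Path x y) (q : Path y w)
      (r : Path x z) (s : Path z w) (_ : ∀ a, p a = F (a, 0)) (_ : ∀ a, q a = F (1, a))
      (_ : ∀ a, r a = F (0, a)) (_ : ∀ a, s a = F (a, 1)),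
      ((∀ a, F a ∈ A') ∨ (∀ a, F a ∈ X2)) → (T p).trans (T q) = (T r).trans (T s) := by
    intro F hF x y z w p q r s hp hq hr hs hor
    rcases hor with h | h
    · rw [T1 p (fun t => hp t ▸ h _), T1 q (fun t => hq t ▸ h _), T1 r (fun t => hr t ▸ h _),
        T1 s (fun t => hs t ▸ h _)]
      exact square (F := fun a => v (F a)) (hvc hF h) _ _ _ _ (fun a => congrArg v (hp a))
        (fun a => congrArg v (hq a)) (fun a => congrArg v (hr a)) (fun a => congrArg v (hs a))
    · rw [T2 p (fun t => hp t ▸ h _), T2 q (fun t => hq t ▸ h _), T2 r (fun t => hr t ▸ h _),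
        T2 s (fun t => hs t ▸ h _)]
      have hx : x ∈ X2 := by have := hp 0 ▸ h (0, 0); simpa using this
      have hy : y ∈ X2 := by have := hp 1 ▸ h (1, 0); simpa using this
      have hz : z ∈ X2 := by have := hs 0 ▸ h (0, 1); simpa using this
      have hw : w ∈ X2 := by have := hs 1 ▸ h (1, 1); simpa using this
      rw [hαt _ _ _ (hv2 _ hx) (hv2 _ hy) (hv2 _ hw), hαt _ _ _ (hv2 _ hx) (hv2 _ hz) (hv2 _ hw)]
  -- rows
  have Tprod : ∀ {x y : X} (p : Path x y) (hp : ∀ t, p t ∈ A') (t : ℕ → I) (n : ℕ),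
      prodQ (fun i => v (p (t i))) (fun i => T (p.subpath (t i) (t (i + 1)))) n
        = .mk (lift (p.subpath (t 0) (t n)) fun _ => hp _) := by
    intro x y p hp t n
    refine Eq.trans ?_ (prodQ_subpath (lift p hp) t n)
    refine congrArg (fun h => prodQ (fun i => v (p (t i))) h n) ?_
    funext i
    exact T1 (p.subpath (t i) (t (i + 1))) fun _ => hp _
  rw [simply_connected_iff_loops_nullhomotopic]
  refine ⟨inferInstance, fun y0 γ => ?_⟩
  set γX : Path (y0 : X) (y0 : X) := γ.map continuous_subtype_val with hγX
  obtain ⟨Φ⟩ : γX.Homotopic (Path.refl (y0 : X)) := SimplyConnectedSpace.paths_homotopic _ _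
  -- Φ (s, t) : s homotopy parameter
  obtain ⟨t, t0, tm, ⟨N, hN⟩, hcell⟩ :=
    exists_monotone_Icc_subset_open_cover_unitInterval_prod_self
      (c := fun i : Bool => Φ ⁻¹' (if i then O else X2))
      (fun i => by
        refine IsOpen.preimage Φ.continuous ?_
        cases i <;> simp [hO, hX2])
      (fun s _ => by
        rcases hcov (Φ s) with h | h
        · exact mem_iUnion.2 ⟨true, by simpa using h⟩
        · exact mem_iUnion.2 ⟨false, by simpa using h⟩)
  -- row paths and column paths
  let row : ∀ s : I, Path (Φ (s, 0)) (Φ (s, 1)) := fun s =>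
    ⟨⟨fun a => Φ (s, a), by fun_prop⟩, rfl, rfl⟩
  let col : ∀ a : I, Path (Φ (0, a)) (Φ (1, a)) := fun a =>
    ⟨⟨fun s => Φ (s, a), by fun_prop⟩, rfl, rfl⟩
  have hg := prodQ_grid (fun i j => v (Φ (t j, t i)))
    (fun i j => T ((row (t j)).subpath (t i) (t (i + 1))))
    (fun i j => T ((col (t i)).subpath (t j) (t (j + 1))))
    (by
      intro i j
      refine Tsq (F := fun a => Φ (Icc.convexComb (t j) (t (j + 1)) a.2,
        Icc.convexComb (t i) (t (i + 1)) a.1)) ?_ _ _ _ _ ?_ ?_ ?_ ?_ ?_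
      · refine Φ.continuous.comp (Continuous.prodMk ?_ ?_)
        · exact (Icc.continuous_convexComb _ _).comp continuous_snd
        · exact (Icc.continuous_convexComb _ _).comp continuous_fst
      · intro a; simp [row, Path.subpath]
      · intro a; simp [col, Path.subpath]
      · intro a; simp [col, Path.subpath]
      · intro a; simp [row, Path.subpath]
      · obtain ⟨b, hb⟩ := hcell j i
        have hmem : ∀ a : I × I, (Icc.convexComb (t j) (t (j + 1)) a.2,
            Icc.convexComb (t i) (t (i + 1)) a.1) ∈ Icc (t j) (t (j + 1)) ×ˢ
              Icc (t i) (t (i + 1)) := fun a =>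
          ⟨⟨Icc.le_convexComb (tm (Nat.le_succ j)) _, Icc.convexComb_le (tm (Nat.le_succ j)) _⟩,
            ⟨Icc.le_convexComb (tm (Nat.le_succ i)) _, Icc.convexComb_le (tm (Nat.le_succ i)) _⟩⟩
        cases b
        · right; intro a; simpa using hb (hmem a)
        · left; intro a; exact hOA (by simpa using hb (hmem a))) N N
  have hΦ0 : ∀ a, Φ (0, a) = γ a := fun a => by simp [hγX]
  have hΦ1 : ∀ a, Φ (1, a) = y0 := fun a => by simp
  have hr0 : ∀ a, row (t 0) a ∈ A' := fun a => by
    change Φ (t 0, a) ∈ A'; rw [t0, hΦ0]; exact (γ a).2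
  have hrN : ∀ a, row (t N) a ∈ A' := fun a => by
    change Φ (t N, a) ∈ A'; rw [hN N le_rfl, hΦ1]; exact y0.2
  have hc0 : ∀ a, col (t 0) a = y0 := fun a => by
    change Φ (a, t 0) = y0; rw [t0]; simp
  have hcN : ∀ a, col (t N) a = y0 := fun a => by
    change Φ (a, t N) = y0; rw [hN N le_rfl]; simp
  have e1 := Tprod (row (t 0)) hr0 t N
  have e2 := Tprod (row (t N)) hrN t N
  have e3 := Tprod (col (t 0)) (fun a => (hc0 a).symm ▸ y0.2) t N
  have e4 := Tprod (col (t N)) (fun a => (hcN a).symm ▸ y0.2) t N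
  have hg' := (congrArg₂ Path.Homotopic.Quotient.trans e1 e4).symm.trans
    (hg.trans (congrArg₂ Path.Homotopic.Quotient.trans e3 e2))
  have hvy : v y0 = y0 := hv1 _ y0.2
  refine grid_final _ _ _ _ hg' (fun s => ?_) (fun s => ?_) (fun s => ?_) γ (fun s => ?_)
  · change v (col (t N) _) = y0
    rw [hcN, hvy]
  · change v (col (t 0) _) = y0
    rw [hc0, hvy]
  · change v (Φ (t N, _)) = y0
    rw [hN N le_rfl, hΦ1, hvy]
  · change γ s = v (Φ (t 0, Icc.convexComb (t 0) (t N) s))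
    rw [t0, hN N le_rfl, Icc.convexComb_zero_one, hΦ0, hv1 _ (γ s).2]

end Grid

end Sub10

namespace Sub10

section Sphere

abbrev E4 : Type := EuclideanSpace ℝ (Fin 4)

instance fact5 : Fact (Module.finrank ℝ (EuclideanSpace ℝ (Fin 5)) = 4 + 1) := ⟨by simp⟩

/-- stereographic projection -/
noncomputable def ster (v : Sph4) : OpenPartialHomeomorph Sph4 E4 := stereographic' 4 v

lemma ster_source (v : Sph4) : (ster v).source = {v}ᶜ := stereographic'_source v

lemma ster_target (v : Sph4) : (ster v).target = univ := stereographic'_target v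

lemma ster_norm (v x : Sph4) : ‖ster v x‖ ^ 2 =
    (2 / (1 - inner ℝ (v : EuclideanSpace ℝ (Fin 5)) x)) ^ 2 *
      (1 - (inner ℝ (v : EuclideanSpace ℝ (Fin 5)) x) ^ 2) := by
  have hv : ‖(v : EuclideanSpace ℝ (Fin 5))‖ = 1 := by simp
  have h1 : ‖ster v x‖ = ‖stereoToFun (v : EuclideanSpace ℝ (Fin 5)) x‖ := by
    simp only [ster, stereographic', OpenPartialHomeomorph.coe_trans, Function.comp]
    exact (OrthonormalBasis.fromOrthogonalSpanSingleton 4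
      (ne_zero_of_mem_unit_sphere v)).repr.norm_map _
  have h2 := Submodule.norm_sq_eq_add_norm_sq_projection (x : EuclideanSpace ℝ (Fin 5))
    (ℝ ∙ (v : EuclideanSpace ℝ (Fin 5)))
  have h3 := Submodule.starProjection_unit_singleton ℝ hv (x : EuclideanSpace ℝ (Fin 5))
  have h4 : ‖(ℝ ∙ (v : EuclideanSpace ℝ (Fin 5))).orthogonalProjectionOnto
      (x : EuclideanSpace ℝ (Fin 5))‖ = |inner ℝ (v : EuclideanSpace ℝ (Fin 5)) x| := by
    have := congrArg norm h3
    rw [norm_smul, hv, mul_one, Real.norm_eq_abs] at this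
    exact this
  rw [h4, sq_abs] at h2
  rw [h1, stereoToFun_apply, norm_smul, mul_pow, Real.norm_eq_abs, sq_abs, innerSL_apply_apply]
  congr 1
  have hx : ‖(x : EuclideanSpace ℝ (Fin 5))‖ = 1 := by simp
  rw [hx] at h2
  linarith

lemma ster_lt {v x y : Sph4} (hy : y ≠ v) (h : dist y v < dist x v) :
    ‖ster v x‖ < ‖ster v y‖ := by
  have key : ∀ z : Sph4, dist z v ^ 2 = 2 - 2 * inner ℝ (v : EuclideanSpace ℝ (Fin 5)) z := by
    intro z
    rw [Subtype.dist_eq, dist_eq_norm, norm_sub_sq_real, real_inner_comm]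
    simp
    ring
  have hy0 : 0 < dist y v := dist_pos.2 hy
  have k1 := key x
  have k2 := key y
  have hb : ∀ z : Sph4, -1 ≤ inner ℝ (v : EuclideanSpace ℝ (Fin 5)) z := by
    intro z
    have := abs_real_inner_le_norm (v : EuclideanSpace ℝ (Fin 5)) z
    simp at this
    exact (abs_le.1 this).1
  have bx := hb x
  have n1 := ster_norm v x
  have n2 := ster_norm v y
  set a := inner ℝ (v : EuclideanSpace ℝ (Fin 5)) (x : EuclideanSpace ℝ (Fin 5))
  set b := inner ℝ (v : EuclideanSpace ℝ (Fin 5)) (y : EuclideanSpace ℝ (Fin 5))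
  have hab : a < b := by nlinarith
  have hb1 : b < 1 := by nlinarith
  have e1 : (2 / (1 - a)) ^ 2 * (1 - a ^ 2) = 8 / (1 - a) - 4 := by
    have : 1 - a ≠ 0 := by linarith
    field_simp; ring
  have e2 : (2 / (1 - b)) ^ 2 * (1 - b ^ 2) = 8 / (1 - b) - 4 := by
    have : 1 - b ≠ 0 := by linarith
    field_simp; ring
  refine lt_of_pow_lt_pow_left₀ 2 (norm_nonneg _) ?_
  rw [n1, n2, e1, e2]
  have : 8 / (1 - a) < 8 / (1 - b) := by
    apply div_lt_div_of_pos_left <;> linarith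
  linarith

instance instLPC : LocallyPathConnectedSpace Sph4 :=
  ChartedSpace.locallyPathConnectedSpace (EuclideanSpace ℝ (Fin 4)) Sph4

lemma rank_E4 : 1 < Module.rank ℝ E4 := by
  rw [← Module.finrank_eq_rank]; simp

lemma sc_compl (v : Sph4) : SimplyConnectedSpace ({v}ᶜ : Set Sph4) := by
  have e1 := (ster v).toHomeomorphSourceTarget
  rw [ster_source, ster_target] at e1
  have e := e1.trans (Homeomorph.Set.univ E4)
  exact e.toHomotopyEquiv.simplyConnectedSpace

lemma exists_two : ∃ v w : Sph4, v ≠ w := by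
  have h : (1 : ℝ) ≠ 0 := one_ne_zero
  refine ⟨⟨EuclideanSpace.single 0 1, by simp⟩, ⟨EuclideanSpace.single 1 1, by simp⟩, ?_⟩
  intro h
  have := congrArg (fun z : Sph4 => (z : EuclideanSpace ℝ (Fin 5)) 0) h
  simp at this

instance instSC : SimplyConnectedSpace Sph4 := by
  obtain ⟨v, w, hvw⟩ := exists_two
  refine sc_of_union (U := fun b => if b then {v}ᶜ else {w}ᶜ) ?_ ?_ ?_ ?_
  · intro i; cases i <;> simp
  · intro x
    by_cases h : x = v
    · exact ⟨false, by simp [h, hvw]⟩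
    · exact ⟨true, by simp [h]⟩
  · intro i; cases i
    · simpa using sc_compl w
    · simpa using sc_compl v
  · have : (⋂ i : Bool, (if i then {v}ᶜ else {w}ᶜ : Set Sph4))
        = (ster v).symm '' {ster v w}ᶜ := by
      ext x
      simp only [mem_iInter, Bool.forall_bool, mem_image]
      constructor
      · rintro ⟨h1, h2⟩
        simp at h1 h2
        have hx : x ∈ (ster v).source := by rw [ster_source]; exact h2
        refine ⟨ster v x, ?_, (ster v).left_inv hx⟩
        intro h
        apply h1
        exact (ster v).injOn hx (by rw [ster_source]; exact hvw.symm) h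
      · rintro ⟨y, hy, rfl⟩
        have hs : (ster v).symm y ∈ (ster v).source :=
          (ster v).map_target (by rw [ster_target]; trivial)
        constructor
        · simp
          intro h
          apply hy
          rw [← h, (ster v).right_inv (by rw [ster_target]; trivial)]
          rfl
        · rw [ster_source] at hs; simpa using hs
    rw [this]
    refine (isPathConnected_compl_singleton_of_one_lt_rank rank_E4 _).image' ?_
    exact (ster v).continuousOn_symm.mono (by rw [ster_target]; exact subset_univ _)

end Sphere

end Sub10

namespace Sub10

section Hep

open unitInterval

lemma hep {X : Type*} [TopologicalSpace X] [CompactSpace X] [T2Space X] {M : Set X}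
    (hM : IsClosed M) (H : X × I → E4) (hH : ContinuousOn H (M ×ˢ univ))
    (hne : ∀ x ∈ M, ∀ t, H (x, t) ≠ 0) (e : E4) (he0 : e ≠ 0)
    (he : ∀ x ∈ M, 0 < inner ℝ e (H (x, 1))) :
    ∃ g : X → E4, Continuous g ∧ (∀ x, g x ≠ 0) ∧ ∀ x ∈ M, g x = H (x, 0) := by
  have hMI : IsClosed (M ×ˢ (univ : Set I)) := hM.prod isClosed_univ
  obtain ⟨E, hE⟩ := ContinuousMap.exists_restrict_eq hMI
    ⟨(M ×ˢ (univ : Set I)).domRestrict H, hH.domRestrict⟩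
  have hE' : ∀ x ∈ M, ∀ t, E (x, t) = H (x, t) := by
    intro x hx t
    have := DFunLike.congr_fun hE ⟨(x, t), ⟨hx, trivial⟩⟩
    simpa using this
  set N1 : Set X := Prod.fst '' {z : X × I | E z = 0} with hN1
  have hN1c : IsClosed N1 := by
    apply isClosedMap_fst_of_compactSpace
    exact isClosed_singleton.preimage E.continuous
  set N2 : Set X := {x | inner ℝ e (E (x, 1)) ≤ 0} with hN2
  have hN2c : IsClosed N2 := by
    apply isClosed_le _ continuous_const
    exact continuous_const.inner (E.continuous.comp (by fun_prop))
  have hdisj : Disjoint M (N1 ∪ N2) := by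
    rw [Set.disjoint_left]
    rintro x hx (⟨⟨x', t⟩, h, rfl⟩ | h)
    · exact hne x' hx t (by rw [← hE' x' hx t]; exact h)
    · have := he x hx
      rw [← hE' x hx] at this
      exact absurd h (not_le.2 this)
  obtain ⟨u, u0, u1, hu⟩ := exists_continuous_zero_one_of_isClosed hM (hN1c.union hN2c) hdisj
  refine ⟨fun x => (1 - max 0 (2 * u x - 1)) • E (x, projIcc 0 1 zero_le_one (2 * u x))
    + max 0 (2 * u x - 1) • e, ?_, ?_, ?_⟩
  · have : Continuous fun x => E (x, projIcc 0 1 zero_le_one (2 * u x)) := by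
      refine E.continuous.comp (continuous_id.prodMk ?_)
      exact continuous_projIcc.comp (by fun_prop)
    fun_prop
  · intro x
    beta_reduce
    by_cases hx : x ∈ N1 ∪ N2
    · have : u x = 1 := u1 hx
      simp only [this]
      norm_num
      exact he0
    · rw [mem_union, not_or] at hx
      have h1 : ∀ t, E (x, t) ≠ 0 := fun t h => hx.1 ⟨(x, t), h, rfl⟩
      have h2 : 0 < inner ℝ e (E (x, 1)) := not_le.1 hx.2
      by_cases h : 2 * u x ≤ 1
      · rw [max_eq_left (by linarith)]
        simpa using h1 _
      · push Not at h
        have hw := (hu x).2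
        rw [max_eq_right (by linarith), projIcc_of_right_le zero_le_one h.le]
        intro h0
        have h3 := congrArg (inner ℝ e) h0
        rw [inner_add_right, inner_smul_right, inner_smul_right, inner_zero_right,
          real_inner_self_eq_norm_sq] at h3
        have h4 : 0 < ‖e‖ ^ 2 := by positivity
        have h5 : 0 ≤ (1 - (2 * u x - 1)) * inner ℝ e (E (x, 1)) :=
          mul_nonneg (by linarith) h2.le
        have h6 : 0 < (2 * u x - 1) * ‖e‖ ^ 2 := mul_pos (by linarith) h4
        exact absurd h3 (by simpa using (add_pos_of_nonneg_of_pos h5 h6).ne')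
  · intro x hx
    have : u x = 0 := u0 hx
    simp only [this]
    norm_num
    exact hE' x hx 0

lemma no_ext {p1 p2 : Sph4} {Q : Set Sph4} (h1 : p1 ∈ Q) (h2 : p2 ∉ closure Q)
    {g : Sph4 → E4} (hg : Continuous g) (hne : ∀ x, g x ≠ 0)
    (hfr : ∀ x ∈ frontier Q, g x = ster p2 x - ster p2 p1) : False := by
  classical
  set s := ster p2 with hs
  have hsc : Continuous s.symm := by
    rw [← continuousOn_univ, ← ster_target p2]; exact s.continuousOn_symm
  have hri : ∀ y, s (s.symm y) = y := fun y => s.right_inv (by rw [hs, ster_target]; trivial)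
  have hp12 : p1 ≠ p2 := fun h => h2 (h ▸ subset_closure h1)
  have hp1 : s.symm (s p1) = p1 := s.left_inv (by rw [hs, ster_source]; exact hp12)
  set G : E4 → E4 := fun y => if s.symm y ∈ Q then g (s.symm y) else y - s p1 with hG
  have hGc : Continuous G := by
    refine Continuous.if ?_ (hg.comp hsc) (by fun_prop)
    intro y hy
    have hy' : s.symm y ∈ frontier Q := hsc.frontier_preimage_subset Q hy
    rw [hfr _ hy', hri]
  have hG0 : ∀ y, G y ≠ 0 := by
    intro y
    simp only [hG]
    split_ifs with h
    · exact hne _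
    · intro h0
      apply h
      rw [sub_eq_zero.1 h0, hp1]
      exact h1
  have hb : Bornology.IsBounded (s '' closure Q) := by
    refine (IsCompact.image_of_continuousOn isClosed_closure.isCompact ?_).isBounded
    refine s.continuousOn.mono ?_
    rw [hs, ster_source]
    intro x hx hx2
    exact h2 (by rw [mem_singleton_iff.1 hx2] at hx; exact hx)
  obtain ⟨R, hR⟩ := hb.subset_ball (s p1)
  have hR0 : 0 < R := by
    have := hR ⟨p1, subset_closure h1, rfl⟩
    simpa using this
  obtain ⟨x, hx⟩ := surj_of_id_outside (g := fun y => G (y + s p1)) (by fun_prop) hR0.le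
    (fun y hy => by
      simp only [hG]
      rw [if_neg]
      · simp
      · intro h
        have := hR ⟨_, subset_closure h, rfl⟩
        rw [hri, mem_ball, dist_eq_norm, add_sub_cancel_right] at this
        linarith) 0
  exact hG0 _ hx

end Hep

end Sub10

namespace Sub10

section Charts

/-- retraction to the half space -/
noncomputable def toH (y : E4) : EuclideanHalfSpace 4 :=
  ⟨y + (max 0 (-y 0)) • EuclideanSpace.single 0 1, by
    simp only [PiLp.add_apply, PiLp.smul_apply, EuclideanSpace.single_apply, if_true, smul_eq_mul,
      mul_one]
    have := le_max_right 0 (-y 0)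
    linarith⟩

lemma toH_cont : Continuous toH := by
  unfold toH
  refine Continuous.subtype_mk ?_ _
  have : Continuous fun y : E4 => y 0 := by fun_prop
  fun_prop

lemma toH_val {y : E4} (hy : 0 ≤ y 0) : (toH y).1 = y := by
  simp only [toH]
  rw [max_eq_left (by linarith)]; simp

lemma toH_self (z : EuclideanHalfSpace 4) : toH z.1 = z := Subtype.ext (toH_val z.2)

lemma val_cont : Continuous (fun z : EuclideanHalfSpace 4 => z.1) := continuous_subtype_val

variable {A : Set Sph4}

lemma exists_ne (x : Sph4) : ∃ v : Sph4, x ≠ v := by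
  obtain ⟨v, w, h⟩ := exists_two
  by_cases hx : x = v
  · exact ⟨w, hx ▸ h⟩
  · exact ⟨v, hx⟩

lemma ster_symm_cont (v : Sph4) : Continuous (ster v).symm := by
  rw [← continuousOn_univ, ← ster_target v]; exact (ster v).continuousOn_symm

lemma ster_right (v : Sph4) (y : E4) : ster v ((ster v).symm y) = y :=
  (ster v).right_inv (by rw [ster_target]; trivial)

lemma ster_left {v x : Sph4} (h : x ≠ v) : (ster v).symm (ster v x) = x :=
  (ster v).left_inv (by rw [ster_source]; exact h)

lemma chart_int (e : OpenPartialHomeomorph A (EuclideanHalfSpace 4)) {x : A} (hx : x ∈ e.source)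
    (h0 : 0 < (e x).1 0) : (x : Sph4) ∈ interior A := by
  obtain ⟨v, hv⟩ := exists_ne (x : Sph4)
  set ψ : E4 → Sph4 := fun y => (e.symm (toH y) : A) with hψ
  have hT : IsOpen (toH ⁻¹' e.target) := e.open_target.preimage toH_cont
  have hψc : ContinuousOn ψ (toH ⁻¹' e.target) :=
    continuous_subtype_val.comp_continuousOn
      (e.continuousOn_symm.comp toH_cont.continuousOn (fun y hy => hy))
  set V : Set E4 := ({y : E4 | 0 < y 0} ∩ (toH ⁻¹' e.target)) ∩ (toH ⁻¹' e.target ∩ ψ ⁻¹' {v}ᶜ)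
    with hV
  have hVo : IsOpen V := by
    refine IsOpen.inter (IsOpen.inter ?_ hT) ?_
    · exact isOpen_lt continuous_const (by fun_prop)
    · exact hψc.isOpen_inter_preimage hT isOpen_compl_singleton
  have hfc : ContinuousOn (fun y => ster v (ψ y)) V := by
    refine (ster v).continuousOn.comp (hψc.mono fun y hy => hy.2.1) fun y hy => ?_
    rw [ster_source]; exact hy.2.2
  have hinj : InjOn (fun y => ster v (ψ y)) V := by
    intro y hy y' hy' h
    have h1 : ψ y = ψ y' := (ster v).injOn (by rw [ster_source]; exact hy.2.2)
      (by rw [ster_source]; exact hy'.2.2) h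
    have h2 : toH y = toH y' := e.symm.injOn hy.2.1 hy'.2.1 (Subtype.ext h1)
    rw [← toH_val hy.1.1.le, ← toH_val hy'.1.1.le, h2]
  have ho := inv_dom hVo hfc hinj
  have ho2 : IsOpen ((ster v).symm '' ((fun y => ster v (ψ y)) '' V)) :=
    (ster v).symm.isOpen_image_of_subset_source ho (by
      rw [OpenPartialHomeomorph.symm_source, ster_target]; exact subset_univ _)
  refine mem_interior.2 ⟨_, ?_, ho2, ?_⟩
  · rintro _ ⟨_, ⟨y, hy, rfl⟩, rfl⟩
    simp only
    rw [ster_left hy.2.2]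
    exact (e.symm (toH y)).2
  · have hψx : ψ (e x).1 = x := by simp only [hψ]; rw [toH_self, e.left_inv hx]
    refine ⟨_, ⟨(e x).1, ?_, rfl⟩, ?_⟩
    · have : (e x).1 ∈ toH ⁻¹' e.target := by
        rw [mem_preimage, toH_self]; exact e.map_source hx
      refine ⟨⟨h0, this⟩, this, ?_⟩
      rw [mem_preimage, hψx]; exact hv
    · simp only
      rw [hψx, ster_left hv]

lemma int_chart (e : OpenPartialHomeomorph A (EuclideanHalfSpace 4)) {x : A} (hx : x ∈ e.source)
    (hi : (x : Sph4) ∈ interior A) : 0 < (e x).1 0 := by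
  classical
  obtain ⟨v, hv⟩ := exists_ne (x : Sph4)
  obtain ⟨O, hO, hOe⟩ := isOpen_induced_iff.1 e.open_source
  set V : Set E4 := (ster v).symm ⁻¹' (interior A ∩ O) with hV
  have hVo : IsOpen V := (isOpen_interior.inter hO).preimage (ster_symm_cont v)
  have hVA : ∀ y ∈ V, (ster v).symm y ∈ A := fun y hy => interior_subset hy.1
  have hVe : ∀ y (hy : y ∈ V), (⟨(ster v).symm y, hVA y hy⟩ : A) ∈ e.source := by
    intro y hy; rw [← hOe]; exact hy.2
  set f : E4 → E4 := fun y => if h : (ster v).symm y ∈ A then (e ⟨_, h⟩).1 else 0 with hf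
  have hfv : ∀ y (hy : y ∈ V), f y = (e ⟨(ster v).symm y, hVA y hy⟩).1 := by
    intro y hy; simp only [hf]; rw [dif_pos (hVA y hy)]
  have hfc : ContinuousOn f V := by
    rw [continuousOn_iff_continuous_domRestrict]
    have : V.domRestrict f = fun y : V => (e ⟨(ster v).symm y.1, hVA y.1 y.2⟩).1 := by
      funext y; exact hfv y.1 y.2
    rw [this]
    refine val_cont.comp ?_
    refine e.continuousOn.comp_continuous ?_ fun y => hVe y.1 y.2
    exact Continuous.subtype_mk ((ster_symm_cont v).comp continuous_subtype_val) _
  have hinj : InjOn f V := by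
    intro y hy y' hy' h
    rw [hfv y hy, hfv y' hy'] at h
    have h1 := e.injOn (hVe y hy) (hVe y' hy') (Subtype.ext h)
    have h2 := congrArg (ster v) (Subtype.ext_iff.1 h1)
    simpa only [ster_right] using h2
  have ho := inv_dom hVo hfc hinj
  have hxV : ster v x ∈ V := by
    rw [hV, mem_preimage, ster_left hv]
    refine ⟨hi, ?_⟩
    have : x ∈ Subtype.val ⁻¹' O := by rw [hOe]; exact hx
    exact this
  have hfx : f (ster v x) = (e x).1 := by
    rw [hfv _ hxV]; congr 2; exact Subtype.ext (ster_left hv)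
  have hsub : f '' V ⊆ {y : E4 | 0 ≤ y 0} := by
    rintro _ ⟨y, hy, rfl⟩
    rw [hfv y hy]; exact (e _).2
  have h := interior_maximal hsub ho ⟨_, hxV, hfx⟩
  rw [interior_halfSpace] at h
  exact h

lemma exists_param (hA : IsClosed A) [hman : ChartedSpace (EuclideanHalfSpace 4) A]
    {x0 : Sph4} (hx0 : x0 ∈ frontier A) :
    ∃ (y0 : E4) (r : ℝ) (ψ : E4 → Sph4) (θ : Sph4 → E4) (O : Set Sph4), 0 < r ∧ IsOpen O ∧
      x0 ∈ O ∧ y0 0 = 0 ∧ ψ y0 = x0 ∧ ContinuousOn ψ (ball y0 r ∩ {y | 0 ≤ y 0}) ∧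
      MapsTo ψ (ball y0 r ∩ {y | 0 ≤ y 0}) (A ∩ O) ∧ ContinuousOn θ (A ∩ O) ∧
      MapsTo θ (A ∩ O) (ball y0 r ∩ {y | 0 ≤ y 0}) ∧
      (∀ y ∈ ball y0 r ∩ {y | 0 ≤ y 0}, θ (ψ y) = y) ∧ (∀ x ∈ A ∩ O, ψ (θ x) = x) ∧
      (∀ x ∈ A ∩ O, x ∈ frontier A ↔ θ x 0 = 0) := by
  classical
  have hx0A : x0 ∈ A := hA.frontier_subset hx0
  set a0 : A := ⟨x0, hx0A⟩ with ha0
  set e := chartAt (EuclideanHalfSpace 4) a0 with he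
  have hes : a0 ∈ e.source := mem_chart_source _ _
  have hT : IsOpen (toH ⁻¹' e.target) := e.open_target.preimage toH_cont
  have hfr : ∀ a : A, a ∈ e.source → ((a : Sph4) ∈ frontier A ↔ (e a).1 0 = 0) := by
    intro a ha
    rw [hA.frontier_eq]
    constructor
    · rintro ⟨_, h⟩
      by_contra hne
      exact h (chart_int e ha (lt_of_le_of_ne (e a).2 (Ne.symm hne)))
    · intro h
      exact ⟨a.2, fun hi => absurd (int_chart e ha hi) (by rw [h]; exact lt_irrefl _)⟩
  obtain ⟨r, hr, hball⟩ := Metric.isOpen_iff.1 hT (e a0).1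
    (by rw [mem_preimage, toH_self]; exact e.map_source hes)
  set y0 : E4 := (e a0).1 with hy0
  have hOA : IsOpen (e.source ∩ e ⁻¹' ((fun z => z.1) ⁻¹' ball y0 r)) :=
    e.continuousOn.isOpen_inter_preimage e.open_source (isOpen_ball.preimage val_cont)
  obtain ⟨O, hO, hOe⟩ := isOpen_induced_iff.1 hOA
  have hOm : ∀ a : A, (a : Sph4) ∈ O ↔ a ∈ e.source ∧ (e a).1 ∈ ball y0 r := by
    intro a
    have : a ∈ Subtype.val ⁻¹' O ↔ a ∈ e.source ∩ e ⁻¹' ((fun z => z.1) ⁻¹' ball y0 r) := by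
      rw [hOe]
    exact this
  set θ : Sph4 → E4 := fun x => if h : x ∈ A then (e ⟨x, h⟩).1 else 0 with hθ
  have hθv : ∀ x (h : x ∈ A), θ x = (e ⟨x, h⟩).1 := fun x h => by simp only [hθ]; rw [dif_pos h]
  refine ⟨y0, r, fun y => (e.symm (toH y) : A), θ, O, hr, hO, ?_, ?_, ?_, ?_, ?_, ?_, ?_, ?_, ?_, ?_⟩
  · exact (hOm a0).2 ⟨hes, mem_ball_self hr⟩
  · exact (hfr a0 hes).1 hx0
  · simp only [hy0]; rw [toH_self, e.left_inv hes]
  · refine continuous_subtype_val.comp_continuousOn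
      (e.continuousOn_symm.comp toH_cont.continuousOn (fun y hy => hball hy.1))
  · intro y hy
    have hyt : toH y ∈ e.target := hball hy.1
    refine ⟨(e.symm (toH y)).2, (hOm _).2 ⟨e.map_target hyt, ?_⟩⟩
    rw [e.right_inv hyt, toH_val hy.2]
    exact hy.1
  · rw [continuousOn_iff_continuous_domRestrict]
    have : (A ∩ O).domRestrict θ = fun x : ↥(A ∩ O) => (e ⟨x.1, x.2.1⟩).1 := by
      funext x; exact hθv x.1 x.2.1
    rw [this]
    refine val_cont.comp ?_
    refine e.continuousOn.comp_continuous ?_ fun x => ((hOm ⟨x.1, x.2.1⟩).1 x.2.2).1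
    exact Continuous.subtype_mk continuous_subtype_val _
  · intro x hx
    rw [hθv x hx.1]
    exact ⟨((hOm ⟨x, hx.1⟩).1 hx.2).2, (e _).2⟩
  · intro y hy
    have hyt : toH y ∈ e.target := hball hy.1
    rw [hθv _ (e.symm (toH y)).2]
    rw [Subtype.coe_eta, e.right_inv hyt, toH_val hy.2]
  · intro x hx
    simp only
    rw [hθv x hx.1, toH_self, e.left_inv ((hOm ⟨x, hx.1⟩).1 hx.2).1]
  · intro x hx
    rw [hθv x hx.1]
    exact hfr ⟨x, hx.1⟩ ((hOm ⟨x, hx.1⟩).1 hx.2).1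

end Charts

end Sub10

namespace Sub10

section Local

open unitInterval

variable {A : Set Sph4}

lemma coord_le (y z : E4) : |y 0 - z 0| ≤ dist y z := by
  have h := EuclideanSpace.dist_eq y z
  rw [h]
  apply Real.le_sqrt_of_sq_le
  rw [← Real.dist_eq]
  exact Finset.single_le_sum (f := fun i => dist (y i) (z i) ^ 2)
    (fun i _ => sq_nonneg _) (Finset.mem_univ 0)

lemma comp_nhds (hA : IsClosed A) [hman : ChartedSpace (EuclideanHalfSpace 4) A]
    {x0 : Sph4} (hx0 : x0 ∈ frontier A) :
    ∃ O : Set Sph4, IsOpen O ∧ x0 ∈ O ∧ frontier A ∩ O ⊆ connectedComponentIn (frontier A) x0 := by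
  obtain ⟨y0, r, ψ, θ, O, hr, hO, hxO, hy0, hψy0, hψc, hψm, hθc, hθm, hθψ, hψθ, hfr⟩ :=
    exists_param hA hx0
  refine ⟨O, hO, hxO, ?_⟩
  have hsub : ball y0 r ∩ {y : E4 | y 0 = 0} ⊆ ball y0 r ∩ {y | 0 ≤ y 0} :=
    fun y hy => ⟨hy.1, le_of_eq hy.2.symm⟩
  have hconv : Convex ℝ (ball y0 r ∩ {y : E4 | y 0 = 0}) := by
    refine (convex_ball _ _).inter ?_
    intro y hy z hz a b _ _ _
    simp only [mem_ofPred_eq] at *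
    simp [hy, hz]
  have hpre : IsPreconnected (ψ '' (ball y0 r ∩ {y : E4 | y 0 = 0})) :=
    hconv.isPreconnected.image _ (hψc.mono hsub)
  have h1 : ψ '' (ball y0 r ∩ {y : E4 | y 0 = 0}) ⊆ connectedComponentIn (frontier A) x0 := by
    refine hpre.subset_connectedComponentIn ⟨y0, ⟨mem_ball_self hr, hy0⟩, hψy0⟩ ?_
    rintro _ ⟨y, hy, rfl⟩
    rw [hfr _ (hψm (hsub hy)), hθψ _ (hsub hy)]
    exact hy.2
  intro x hx
  have hxA : x ∈ A ∩ O := ⟨hA.frontier_subset hx.1, hx.2⟩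
  refine h1 ⟨θ x, ⟨(hθm hxA).1, (hfr x hxA).1 hx.1⟩, hψθ x hxA⟩

lemma inner_nhds (hA : IsClosed A) [hman : ChartedSpace (EuclideanHalfSpace 4) A]
    {x0 : Sph4} (hx0 : x0 ∈ frontier A) :
    ∃ O S : Set Sph4, IsOpen O ∧ x0 ∈ O ∧ S ⊆ interior A ∧ IsPreconnected S ∧
      x0 ∈ closure S ∧ interior A ∩ O ⊆ S := by
  obtain ⟨y0, r, ψ, θ, O, hr, hO, hxO, hy0, hψy0, hψc, hψm, hθc, hθm, hθψ, hψθ, hfr⟩ :=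
    exists_param hA hx0
  have hinn : ∀ x ∈ A ∩ O, x ∈ interior A ↔ 0 < θ x 0 := by
    intro x hx
    have h1 := hfr x hx
    rw [hA.frontier_eq] at h1
    have h2 : 0 ≤ θ x 0 := (hθm hx).2
    constructor
    · intro h
      exact lt_of_le_of_ne h2 fun h3 => (h1.2 h3.symm).2 h
    · intro h
      by_contra h3
      exact h.ne' (h1.1 ⟨hx.1, h3⟩)
  have hsub : ball y0 r ∩ {y : E4 | 0 < y 0} ⊆ ball y0 r ∩ {y | 0 ≤ y 0} :=
    fun y hy => ⟨hy.1, show 0 ≤ y 0 from le_of_lt (show 0 < y 0 from hy.2)⟩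
  have hconv : Convex ℝ (ball y0 r ∩ {y : E4 | 0 < y 0}) := by
    refine (convex_ball _ _).inter ?_
    exact convex_halfSpace_gt (f := fun y : E4 => y 0) ⟨fun _ _ => rfl, fun _ _ => rfl⟩ 0
  refine ⟨O, ψ '' (ball y0 r ∩ {y : E4 | 0 < y 0}), hO, hxO, ?_,
    hconv.isPreconnected.image _ (hψc.mono hsub), ?_, ?_⟩
  · rintro _ ⟨y, hy, rfl⟩
    rw [hinn _ (hψm (hsub hy)), hθψ _ (hsub hy)]
    exact hy.2
  · have hcl : y0 ∈ closure (ball y0 r ∩ {y : E4 | 0 < y 0}) := by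
      rw [Metric.mem_closure_iff]
      intro ε hε
      have hd : dist y0 (y0 + (min ε r / 2) • EuclideanSpace.single 0 1) = min ε r / 2 := by
        rw [dist_self_add_right, norm_smul]
        have : 0 < min ε r := lt_min hε hr
        simp [abs_of_pos this]
      have h0 : 0 < min ε r := lt_min hε hr
      refine ⟨y0 + (min ε r / 2) • EuclideanSpace.single 0 1, ⟨?_, ?_⟩, ?_⟩
      · rw [mem_ball, dist_comm, hd]
        have := min_le_right ε r; linarith
      · simp only [mem_ofPred_eq, PiLp.add_apply, PiLp.smul_apply, hy0]
        simp [h0]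
      · rw [hd]
        have := min_le_left ε r; linarith
    have hcw : ContinuousWithinAt ψ (ball y0 r ∩ {y : E4 | 0 < y 0}) y0 :=
      (hψc y0 ⟨mem_ball_self hr, le_of_eq hy0.symm⟩).mono hsub
    have := hcw.mem_closure_image hcl
    rwa [hψy0] at this
  · rintro x ⟨hx, hxO'⟩
    have hxA : x ∈ A ∩ O := ⟨interior_subset hx, hxO'⟩
    exact ⟨θ x, ⟨(hθm hxA).1, (hinn x hxA).1 hx⟩, hψθ x hxA⟩

lemma push (hA : IsClosed A) [hman : ChartedSpace (EuclideanHalfSpace 4) A]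
    {x0 : Sph4} (hx0 : x0 ∈ frontier A) :
    ∃ (φ : Sph4 × I → Sph4) (δ : ℝ), 0 < δ ∧ ContinuousOn φ (A ×ˢ univ) ∧
      (∀ x ∈ A, ∀ t, φ (x, t) ∈ A) ∧ (∀ x ∈ A, φ (x, 0) = x) ∧
      ∀ x ∈ frontier A, δ ≤ dist (φ (x, 1)) x0 := by
  classical
  obtain ⟨y0, r, ψ, θ, O, hr, hO, hxO, hy0, hψy0, hψc, hψm, hθc, hθm, hθψ, hψθ, hfr⟩ :=
    exists_param hA hx0
  set η : E4 → ℝ := fun y => max 0 (r / 3 - dist y y0) with hη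
  have hη0 : ∀ y, 0 ≤ η y := fun y => le_max_left _ _
  have hηc : Continuous η := by fun_prop
  set u : E4 := EuclideanSpace.single 0 1 with hu
  have hun : ‖u‖ = 1 := by simp [hu]
  set P : E4 × I → E4 := fun z => z.1 + ((z.2 : ℝ) * η z.1) • u with hP
  have hPc : Continuous P := by fun_prop
  have hP0 : ∀ y t, P (y, t) 0 = y 0 + t * η y := by
    intro y t; simp [hP, hu]
  have hPd : ∀ y t, dist (P (y, t)) y ≤ η y := by
    intro y t
    simp only [hP]
    rw [dist_self_add_left, norm_smul, hun, mul_one, Real.norm_eq_abs,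
      abs_of_nonneg (mul_nonneg t.2.1 (hη0 y))]
    exact mul_le_of_le_one_left (hη0 y) t.2.2
  have hPm : ∀ y t, y ∈ ball y0 r ∩ {y | 0 ≤ y 0} → P (y, t) ∈ ball y0 r ∩ {y | 0 ≤ y 0} := by
    intro y t hy
    constructor
    · rw [mem_ball]
      have h1 := hPd y t
      have h2 := dist_triangle (P (y, t)) y y0
      have h3 : dist y y0 < r := hy.1
      by_cases h : dist y y0 ≤ r / 3
      · have : η y = r / 3 - dist y y0 := max_eq_right (by linarith)
        linarith
      · have : η y = 0 := max_eq_left (by linarith)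
        linarith
    · rw [mem_ofPred_eq, hP0]
      exact add_nonneg hy.2 (mul_nonneg t.2.1 (hη0 y))
  set φ : Sph4 × I → Sph4 := fun z => if z.1 ∈ O then ψ (P (θ z.1, z.2)) else z.1 with hφ
  set C : Set Sph4 := ψ '' (closedBall y0 (r / 3) ∩ {y | 0 ≤ y 0}) with hC
  have hCsub : closedBall y0 (r / 3) ∩ {y : E4 | 0 ≤ y 0} ⊆ ball y0 r ∩ {y | 0 ≤ y 0} :=
    inter_subset_inter_left _ (closedBall_subset_ball (by linarith))
  have hCc : IsClosed C := by
    refine IsCompact.isClosed (IsCompact.image_of_continuousOn ?_ (hψc.mono hCsub))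
    exact (isCompact_closedBall _ _).inter_right (isClosed_le continuous_const (by fun_prop))
  have hCO : C ⊆ O := by
    rintro _ ⟨y, hy, rfl⟩; exact (hψm (hCsub hy)).2
  have hφC : ∀ x ∈ A, x ∉ C → ∀ t, φ (x, t) = x := by
    intro x hx hxC t
    simp only [hφ]
    split_ifs with h
    · have hxA : x ∈ A ∩ O := ⟨hx, h⟩
      have h1 : ¬ dist (θ x) y0 ≤ r / 3 := fun h2 =>
        hxC ⟨θ x, ⟨h2, (hθm hxA).2⟩, hψθ x hxA⟩
      have : η (θ x) = 0 := max_eq_left (by linarith)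
      simp only [hP, this]
      simpa using hψθ x hxA
    · rfl
  have hφO : ∀ x ∈ A ∩ O, ∀ t, φ (x, t) = ψ (P (θ x, t)) := by
    intro x hx t; simp only [hφ]; rw [if_pos hx.2]
  obtain ⟨δ, hδ, hδO⟩ : ∃ δ > 0, ∀ x ∈ A, dist x x0 < δ → x ∈ O ∧ dist (θ x) y0 < r / 12 := by
    have h1 : ContinuousWithinAt θ (A ∩ O) x0 := hθc x0 ⟨hA.frontier_subset hx0, hxO⟩
    have h2 : θ x0 = y0 := by
      rw [← hψy0]; exact hθψ _ ⟨mem_ball_self hr, le_of_eq hy0.symm⟩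
    obtain ⟨δ1, hδ1, h3⟩ := Metric.continuousWithinAt_iff.1 h1 (r / 12) (by linarith)
    obtain ⟨δ2, hδ2, h4⟩ := Metric.isOpen_iff.1 hO x0 hxO
    refine ⟨min δ1 δ2, lt_min hδ1 hδ2, fun x hx hd => ?_⟩
    have hxO' : x ∈ O := h4 (hd.trans_le (min_le_right _ _))
    refine ⟨hxO', ?_⟩
    have := h3 ⟨hx, hxO'⟩ (hd.trans_le (min_le_left _ _))
    rwa [h2] at this
  have hφA : ∀ x ∈ A, ∀ t, φ (x, t) ∈ A := by
    intro x hx t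
    by_cases h : x ∈ O
    · rw [hφO x ⟨hx, h⟩]; exact (hψm (hPm _ _ (hθm ⟨hx, h⟩))).1
    · simp only [hφ]; rw [if_neg h]; exact hx
  refine ⟨φ, δ, hδ, ?_, hφA, ?_, ?_⟩
  · rintro ⟨x, t⟩ ⟨hx, -⟩
    simp only at hx
    by_cases h : x ∈ O
    · have hc : ContinuousOn (fun z : Sph4 × I => ψ (P (θ z.1, z.2))) ((A ∩ O) ×ˢ univ) := by
        refine hψc.comp (hPc.comp_continuousOn ?_) fun z hz => hPm _ _ (hθm hz.1)
        exact (hθc.comp continuousOn_fst fun z hz => hz.1).prodMk continuousOn_snd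
      have hc' : ContinuousOn φ ((A ∩ O) ×ˢ univ) := hc.congr fun z hz => hφO z.1 hz.1 z.2
      have := hc' (x, t) ⟨⟨hx, h⟩, trivial⟩
      refine this.mono_of_mem_nhdsWithin ?_
      rw [mem_nhdsWithin]
      exact ⟨O ×ˢ univ, hO.prod isOpen_univ, ⟨h, trivial⟩, fun z hz => ⟨⟨hz.2.1, hz.1.1⟩, trivial⟩⟩
    · have hxC : x ∉ C := fun h' => h (hCO h')
      have hc' : ContinuousOn φ ((A ∩ Cᶜ) ×ˢ univ) :=
        continuousOn_fst.congr fun z hz => hφC z.1 hz.1.1 hz.1.2 z.2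
      have := hc' (x, t) ⟨⟨hx, hxC⟩, trivial⟩
      refine this.mono_of_mem_nhdsWithin ?_
      rw [mem_nhdsWithin]
      exact ⟨Cᶜ ×ˢ univ, hCc.isOpen_compl.prod isOpen_univ, ⟨hxC, trivial⟩,
        fun z hz => ⟨⟨hz.2.1, hz.1.1⟩, trivial⟩⟩
  · intro x hx
    by_cases h : x ∈ O
    · rw [hφO x ⟨hx, h⟩]
      simp only [hP]
      simpa using hψθ x ⟨hx, h⟩
    · simp only [hφ]; rw [if_neg h]
  · intro x hx
    by_contra hlt
    push Not at hlt
    have hxA : x ∈ A := hA.frontier_subset hx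
    obtain ⟨h1, h2⟩ := hδO _ (hφA x hxA 1) hlt
    by_cases h : x ∈ O
    · have hxAO : x ∈ A ∩ O := ⟨hxA, h⟩
      rw [hφO x hxAO, hθψ _ (hPm _ _ (hθm hxAO))] at h2
      have h3 := (hfr x hxAO).1 hx
      have h4 := hP0 (θ x) 1
      rw [h3] at h4
      have h5 := (coord_le (P (θ x, 1)) y0).trans_lt h2
      rw [h4, hy0] at h5
      have h6 : η (θ x) < r / 12 := by
        have := (abs_lt.1 h5).2
        simpa using this
      have h7 : r / 3 - dist (θ x) y0 ≤ η (θ x) := le_max_right _ _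
      have h8 := hPd (θ x) 1
      have h9 := dist_triangle_left (θ x) y0 (P (θ x, 1))
      linarith
    · have : φ (x, 1) = x := by simp only [hφ]; rw [if_neg h]
      rw [this] at h1
      exact h h1

lemma outer (hA : IsClosed A) [hman : ChartedSpace (EuclideanHalfSpace 4) A] {M : Set Sph4}
    (hM : IsClosed M) (hMA : M ⊆ frontier A) {x0 : Sph4} (hx0 : x0 ∈ M) :
    ∃ δ > 0, ∀ p1 p2 : Sph4, p1 ∉ A → p2 ∉ A → dist p1 x0 < δ → dist p2 x0 < δ →
      p2 ∈ connectedComponentIn Mᶜ p1 := by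
  obtain ⟨φ, δ, hδ, hφc, hφA, hφ0, hφ1⟩ := push hA (hMA hx0)
  refine ⟨δ / 3, by positivity, fun p1 p2 h1 h2 hd1 hd2 => ?_⟩
  by_contra hcon
  have hMsub : M ⊆ A := fun x hx => hA.frontier_subset (hMA hx)
  have hp1 : p1 ∈ Mᶜ := fun h => h1 (hMsub h)
  have hp2 : p2 ∈ Mᶜ := fun h => h2 (hMsub h)
  set Q := connectedComponentIn Mᶜ p1 with hQ
  have hQo : IsOpen Q := hM.isOpen_compl.connectedComponentIn
  have hp1Q : p1 ∈ Q := mem_connectedComponentIn hp1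
  have hclQ : closure Q ⊆ Q ∪ M := by
    intro x hx
    by_contra hx'
    rw [mem_union, not_or] at hx'
    have hxM : x ∈ Mᶜ := hx'.2
    obtain ⟨y, hy1, hy2⟩ := mem_closure_iff.1 hx _ (hM.isOpen_compl.connectedComponentIn (x := x))
      (mem_connectedComponentIn hxM)
    apply hx'.1
    have e1 := connectedComponentIn_eq hy1
    have e2 := connectedComponentIn_eq hy2
    rw [hQ, e2, ← e1]
    exact mem_connectedComponentIn hxM
  have hp2c : p2 ∉ closure Q := fun h => (hclQ h).elim hcon hp2
  have hp12 : p1 ≠ p2 := fun h => hp2c (h ▸ subset_closure hp1Q)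
  have hd : ∀ x ∈ M, ‖ster p2 (φ (x, 1))‖ < ‖ster p2 p1‖ := by
    intro x hx
    apply ster_lt hp12
    have h3 := hφ1 x (hMA hx)
    have h4 := dist_triangle_right p1 p2 x0
    have h5 := dist_triangle (φ (x, 1)) p2 x0
    linarith
  have hs0 : ster p2 p1 ≠ 0 := by
    intro h0
    have := hd x0 hx0
    rw [h0, norm_zero] at this
    exact absurd this (not_lt.2 (norm_nonneg _))
  obtain ⟨g, hg, hgne, hgM⟩ := hep hM (fun z => ster p2 (φ z) - ster p2 p1) (by
      refine ContinuousOn.sub ?_ continuousOn_const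
      refine (ster p2).continuousOn.comp (hφc.mono (prod_mono hMsub subset_rfl)) ?_
      rintro ⟨x, t⟩ ⟨hx, -⟩
      rw [ster_source]
      intro h
      exact h2 (mem_singleton_iff.1 h ▸ hφA x (hMsub hx) t))
    (by
      intro x hx t h0
      have h3 : ster p2 (φ (x, t)) = ster p2 p1 := sub_eq_zero.1 h0
      have h4 := (ster p2).injOn (by
        rw [ster_source]
        intro h
        exact h2 (mem_singleton_iff.1 h ▸ hφA x (hMsub hx) t)) (by
        rw [ster_source]; exact hp12) h3
      exact h1 (h4 ▸ hφA x (hMsub hx) t))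
    (-ster p2 p1) (neg_ne_zero.2 hs0)
    (by
      intro x hx
      have h3 := hd x hx
      have h4 := real_inner_le_norm (ster p2 p1) (ster p2 (φ (x, 1)))
      rw [inner_neg_left, inner_sub_right, real_inner_self_eq_norm_sq]
      have h5 : 0 < ‖ster p2 p1‖ := norm_pos_iff.2 hs0
      nlinarith)
  refine no_ext hp1Q hp2c hg hgne fun x hx => ?_
  have hxM : x ∈ M := by
    rw [hQo.frontier_eq] at hx
    exact (hclQ hx.1).resolve_left hx.2
  rw [hgM x hxM]
  beta_reduce
  rw [hφ0 x (hMsub hxM)]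

end Local

end Sub10

namespace Sub10

section Sep

variable {A : Set Sph4}

lemma sep (hA : IsClosed A) (hconn : IsPreconnected A) {M : Set Sph4}
    (hM : IsClosed M) (hMA : M ⊆ frontier A) (hKM : IsClosed (frontier A \ M))
    {x0 : Sph4} (hx0 : x0 ∈ M) :
    ∃ F : Sph4 → ℝ, Continuous F ∧ (∀ x ∈ M, F x = 0) ∧ (∀ x ∈ A, x ∉ M → 0 < F x) ∧
      ∀ x ∉ A, ∃ n : ℤ, F x = n := by
  classical
  have hMn : M.Nonempty := ⟨x0, hx0⟩
  have hpos : ∀ x ∉ M, 0 < infDist x M := fun x hx => (hM.notMem_iff_infDist_pos hMn).1 hx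
  obtain ⟨δ, hδ, hδK⟩ : ∃ δ > 0, ∀ x ∈ frontier A \ M, δ ≤ infDist x M := by
    rcases (frontier A \ M).eq_empty_or_nonempty with h | h
    · exact ⟨1, one_pos, by rw [h]; simp⟩
    · obtain ⟨x, hx, hmin⟩ := hKM.isCompact.exists_isMinOn h
        (continuous_infDist_pt M).continuousOn
      exact ⟨infDist x M, hpos x hx.2, fun y hy => hmin hy⟩
  set h : Sph4 → ℝ := fun x => min 1 (infDist x M / δ) with hh
  have hhc : Continuous h := by
    have := continuous_infDist_pt M
    fun_prop
  have hh0 : ∀ x ∈ M, h x = 0 := by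
    intro x hx; simp only [hh]; rw [infDist_zero_of_mem hx]; simp
  have hh1 : ∀ x ∈ frontier A \ M, h x = 1 := by
    intro x hx; simp only [hh]
    exact min_eq_left ((one_le_div hδ).2 (hδK x hx))
  have hhp : ∀ x ∉ M, 0 < h x := fun x hx => lt_min one_pos (div_pos (hpos x hx) hδ)
  set f : Sph4 → AddCircle (1 : ℝ) := fun x => if x ∈ A then (h x : AddCircle (1 : ℝ)) else 0
    with hf
  have hfc : Continuous f := by
    refine Continuous.if ?_ ((AddCircle.continuous_mk' 1).comp hhc) continuous_const
    intro x hx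
    have hx' : x ∈ frontier A := hx
    by_cases hxM : x ∈ M
    · rw [hh0 x hxM]; simp
    · rw [hh1 x ⟨hx', hxM⟩]; exact AddCircle.coe_period 1
  have hx0A : x0 ∈ A := hA.frontier_subset (hMA hx0)
  obtain ⟨F, ⟨hF0, hFl⟩, -⟩ := (AddCircle.isCoveringMap_coe (1 : ℝ)).existsUnique_continuousMap_lifts
    ⟨f, hfc⟩ x0 (0 : ℝ) (by simp [hf, hx0A, hh0 x0 hx0])
  have hFf : ∀ x, ((F x : ℝ) : AddCircle (1 : ℝ)) = f x := fun x => congrFun hFl x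
  have hinn : ∀ x ∈ A, F x - h x ∈ range ((↑) : ℤ → ℝ) := by
    intro x hx
    have h1 : ((F x - h x : ℝ) : AddCircle (1 : ℝ)) = 0 := by
      rw [AddCircle.coe_sub, hFf x]; simp [hf, hx]
    obtain ⟨n, hn⟩ := AddCircle.coe_eq_zero_iff (1 : ℝ) |>.1 h1
    exact ⟨n, by rw [← hn]; simp⟩
  have hdisc : DiscreteTopology (range ((↑) : ℤ → ℝ)) :=
    (Int.isClosedEmbedding_coe_real.isEmbedding.toHomeomorph).symm.isEmbedding.discreteTopology
  have hFh : ∀ x ∈ A, F x = h x := by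
    intro x hx
    have := hconn.constant_of_mapsTo (T := range ((↑) : ℤ → ℝ)) (f := fun x => F x - h x)
      ⟨inferInstance⟩ (by fun_prop) hinn hx hx0A
    simp only [hF0, hh0 x0 hx0, sub_zero] at this
    linarith
  refine ⟨F, F.continuous, ?_, ?_, ?_⟩
  · intro x hx
    rw [hFh x (hA.frontier_subset (hMA hx)), hh0 x hx]
  · intro x hx hxM
    rw [hFh x hx]; exact hhp x hxM
  · intro x hx
    have h1 : ((F x : ℝ) : AddCircle (1 : ℝ)) = 0 := by rw [hFf x]; simp [hf, hx]
    obtain ⟨n, hn⟩ := AddCircle.coe_eq_zero_iff (1 : ℝ) |>.1 h1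
    exact ⟨n, by rw [← hn]; simp⟩

end Sep

end Sub10

namespace Sub10

lemma loc_one {M P : Set Sph4} (hMc : IsPreconnected M) {x1 : Sph4} (hx1 : x1 ∈ M)
    (hcl : ∀ x ∈ M, x ∈ closure P)
    (hloc : ∀ x ∈ M, ∃ O, IsOpen O ∧ x ∈ O ∧ ∀ p1 ∈ P ∩ O, ∀ p2 ∈ P ∩ O,
      connectedComponentIn Mᶜ p2 = connectedComponentIn Mᶜ p1) :
    ∃ w ∈ P, ∀ x ∈ M, ∃ O, IsOpen O ∧ x ∈ O ∧
      ∀ p ∈ P ∩ O, connectedComponentIn Mᶜ p = connectedComponentIn Mᶜ w := by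
  obtain ⟨O1, hO1, hxO1, h1⟩ := hloc x1 hx1
  obtain ⟨w, hwO, hwP⟩ := mem_closure_iff.1 (hcl x1 hx1) O1 hO1 hxO1
  refine ⟨w, hwP, ?_⟩
  by_contra hcon
  push Not at hcon
  obtain ⟨z, hzM, hz⟩ := hcon
  let u : Set Sph4 := ⋃₀ {O | IsOpen O ∧ ∀ p ∈ P ∩ O,
    connectedComponentIn Mᶜ p = connectedComponentIn Mᶜ w}
  let v : Set Sph4 := ⋃₀ {O | IsOpen O ∧ ∀ p ∈ P ∩ O,
    connectedComponentIn Mᶜ p ≠ connectedComponentIn Mᶜ w}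
  have hcov : M ⊆ u ∪ v := by
    intro x hx
    obtain ⟨O, hO, hxO, h⟩ := hloc x hx
    by_cases hc : ∃ p ∈ P ∩ O, connectedComponentIn Mᶜ p = connectedComponentIn Mᶜ w
    · obtain ⟨p, hp, he⟩ := hc
      exact Or.inl ⟨O, ⟨hO, fun q hq => (h p hp q hq).trans he⟩, hxO⟩
    · push Not at hc
      exact Or.inr ⟨O, ⟨hO, hc⟩, hxO⟩
  have hu : (M ∩ u).Nonempty := ⟨x1, hx1, O1, ⟨hO1, fun q hq => h1 w ⟨hwP, hwO⟩ q hq⟩, hxO1⟩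
  have hv : (M ∩ v).Nonempty := by
    refine ⟨z, hzM, (hcov hzM).resolve_left ?_⟩
    rintro ⟨O, ⟨hO, h⟩, hzO⟩
    obtain ⟨p, hp, hne⟩ := hz O hO hzO
    exact hne (h p hp)
  obtain ⟨x, hxM, ⟨O, ⟨hO, h⟩, hxO⟩, ⟨O', ⟨hO', h'⟩, hxO'⟩⟩ :=
    hMc u v (isOpen_sUnion fun O h => h.1) (isOpen_sUnion fun O h => h.1) hcov hu hv
  obtain ⟨p, ⟨hp1, hp2⟩, hpP⟩ := mem_closure_iff.1 (hcl x hxM) (O ∩ O') (hO.inter hO') ⟨hxO, hxO'⟩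
  exact h' p ⟨hpP, hp2⟩ (h p ⟨hpP, hp1⟩)

lemma closure_comp {M : Set Sph4} (hM : IsClosed M) (p : Sph4) :
    closure (connectedComponentIn Mᶜ p) ⊆ connectedComponentIn Mᶜ p ∪ M := by
  intro x hx
  by_contra hx'
  rw [mem_union, not_or] at hx'
  have hxM : x ∈ Mᶜ := hx'.2
  obtain ⟨y, hy1, hy2⟩ := mem_closure_iff.1 hx _ (hM.isOpen_compl.connectedComponentIn (x := x))
    (mem_connectedComponentIn hxM)
  apply hx'.1
  have e1 := connectedComponentIn_eq hy1
  have e2 := connectedComponentIn_eq hy2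
  rw [e2, ← e1]
  exact mem_connectedComponentIn hxM

lemma comp_meets {M : Set Sph4} (hM : IsClosed M) (hne : M.Nonempty) {p : Sph4} (hp : p ∉ M) :
    ∃ x ∈ M, x ∈ closure (connectedComponentIn Mᶜ p) := by
  by_contra hcon
  push Not at hcon
  have hcl : IsClosed (connectedComponentIn Mᶜ p) := by
    apply isClosed_of_closure_subset
    intro x hx
    exact (closure_comp hM p hx).resolve_right fun h => hcon x h hx
  have := IsClopen.eq_univ ⟨hcl, hM.isOpen_compl.connectedComponentIn⟩
    ⟨p, mem_connectedComponentIn (F := Mᶜ) hp⟩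
  obtain ⟨x, hx⟩ := hne
  exact connectedComponentIn_subset _ _ (this ▸ mem_univ x : x ∈ connectedComponentIn Mᶜ p) hx

lemma main_facts {A : Set Sph4} (hA : IsClosed A) (hconn : IsPreconnected A)
    [hman : ChartedSpace (EuclideanHalfSpace 4) A] {x1 : Sph4} (hx1 : x1 ∈ frontier A) {M : Set Sph4}
    (hMe : M = connectedComponentIn (frontier A) x1) :
    IsClosed M ∧ M ⊆ frontier A ∧ M.Nonempty ∧ ∃ u ∈ interior A, ∃ w ∉ A,
      connectedComponentIn Mᶜ u ≠ connectedComponentIn Mᶜ w ∧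
      (∀ y ∉ M, connectedComponentIn Mᶜ y = connectedComponentIn Mᶜ u ∨
        connectedComponentIn Mᶜ y = connectedComponentIn Mᶜ w) ∧
      (∀ y ∈ A, y ∉ M → connectedComponentIn Mᶜ y = connectedComponentIn Mᶜ u) ∧
      M ⊆ closure (connectedComponentIn Mᶜ u) ∧
      ∀ x ∈ M, ∃ O, IsOpen O ∧ x ∈ O ∧ ∀ y ∈ O, y ∉ A →
        connectedComponentIn Mᶜ y = connectedComponentIn Mᶜ w := by
  have hMA : M ⊆ frontier A := hMe ▸ connectedComponentIn_subset _ _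
  have hMsub : M ⊆ A := fun x hx => hA.frontier_subset (hMA hx)
  have hMpc : IsPreconnected M := hMe ▸ isPreconnected_connectedComponentIn
  have hx1M : x1 ∈ M := hMe ▸ mem_connectedComponentIn hx1
  have hMcl : IsClosed M := by
    apply isClosed_of_closure_subset
    have h1 : closure M ⊆ frontier A := closure_minimal hMA isClosed_frontier
    have h2 := hMpc.closure.subset_connectedComponentIn (subset_closure hx1M) h1
    exact hMe ▸ h2
  have hnb : ∀ x ∈ M, ∃ O, IsOpen O ∧ x ∈ O ∧ frontier A ∩ O ⊆ M := by
    intro x hx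
    obtain ⟨O, hO, hxO, h⟩ := comp_nhds hA (hMA hx)
    refine ⟨O, hO, hxO, ?_⟩
    have : connectedComponentIn (frontier A) x1 = connectedComponentIn (frontier A) x :=
      connectedComponentIn_eq (hMe ▸ hx)
    rw [hMe, this]
    exact h
  have hKM : IsClosed (frontier A \ M) := by
    apply isClosed_of_closure_subset
    intro x hx
    have hxK : x ∈ frontier A := closure_minimal diff_subset isClosed_frontier hx
    refine ⟨hxK, fun hxM => ?_⟩
    obtain ⟨O, hO, hxO, h⟩ := hnb x hxM
    obtain ⟨y, hyO, hyK, hyM⟩ := mem_closure_iff.1 hx O hO hxO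
    exact hyM (h ⟨hyK, hyO⟩)
  have hinn : interior A ⊆ Mᶜ := fun x hx hxM => (hMA hxM).2 hx
  have hclc : ∀ x ∈ M, x ∈ closure Aᶜ := by
    intro x hx
    rw [closure_compl]
    exact (hMA hx).2
  obtain ⟨w, hwA, hw⟩ := loc_one (P := Aᶜ) hMpc hx1M hclc (by
    intro x hx
    obtain ⟨δ, hδ, h⟩ := outer hA hMcl hMA hx
    refine ⟨ball x δ, isOpen_ball, mem_ball_self hδ, ?_⟩
    rintro p1 ⟨hp1, hp1'⟩ p2 ⟨hp2, hp2'⟩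
    exact (connectedComponentIn_eq (h p1 p2 hp1 hp2 hp1' hp2')).symm)
  obtain ⟨u, huA, hu⟩ := loc_one (P := interior A) hMpc hx1M (by
      intro x hx
      obtain ⟨O, S, hO, hxO, hS, hSc, hxS, h⟩ := inner_nhds hA (hMA hx)
      exact closure_mono hS hxS) (by
    intro x hx
    obtain ⟨O, S, hO, hxO, hS, hSc, hxS, h⟩ := inner_nhds hA (hMA hx)
    refine ⟨O, hO, hxO, ?_⟩
    intro p1 hp1 p2 hp2
    exact (connectedComponentIn_eq
      (hSc.subset_connectedComponentIn (h hp1) (hS.trans hinn) (h hp2))).symm)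
  obtain ⟨F, hF, hF0, hFA, hFn⟩ := sep hA hconn hMcl hMA hKM hx1M
  have hsplit : ∀ C : Set Sph4, IsPreconnected C → C ⊆ Mᶜ → ∀ y ∈ C, 0 < F y →
      ∀ z ∈ C, 0 < F z := by
    intro C hC hCM y hy hFy
    have ho2 : IsOpen (Aᶜ ∩ {x | F x < 1 / 2}) :=
      hA.isOpen_compl.inter (isOpen_lt hF continuous_const)
    have hsub := hC.subset_left_of_subset_union (u := {x | 0 < F x})
      (v := Aᶜ ∩ {x | F x < 1 / 2}) (isOpen_lt continuous_const hF) ho2 (by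
        rw [Set.disjoint_left]
        rintro x hx ⟨hxA, hx2⟩
        have hx : 0 < F x := hx
        have hx2 : F x < 1 / 2 := hx2
        obtain ⟨n, hn⟩ := hFn x hxA
        rw [hn] at hx hx2
        have h1 : 0 < n := by exact_mod_cast hx
        have h2 : (1 : ℝ) ≤ n := by exact_mod_cast h1
        linarith) (by
        intro x hx
        by_cases h0 : 0 < F x
        · exact Or.inl h0
        · refine Or.inr ⟨fun hxA => h0 (hFA x hxA (hCM hx)), ?_⟩
          show F x < 1 / 2
          linarith) ⟨y, hy, hFy⟩
    exact fun z hz => hsub hz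
  have hwp : ∃ p ∈ Aᶜ, ¬ 0 < F p ∧ connectedComponentIn Mᶜ p = connectedComponentIn Mᶜ w := by
    obtain ⟨O, hO, hxO, h⟩ := hw x1 hx1M
    obtain ⟨p, ⟨hpO, hpF⟩, hpA⟩ := mem_closure_iff.1 (hclc x1 hx1M) (O ∩ {x | F x < 1 / 2})
      (hO.inter (isOpen_lt hF continuous_const)) ⟨hxO, by
        show F x1 < 1 / 2
        rw [hF0 x1 hx1M]; norm_num⟩
    refine ⟨p, hpA, fun h0 => ?_, h p ⟨hpA, hpO⟩⟩
    have hpF : F p < 1 / 2 := hpF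
    obtain ⟨n, hn⟩ := hFn p hpA
    rw [hn] at h0 hpF
    have h1 : 0 < n := by exact_mod_cast h0
    have h2 : (1 : ℝ) ≤ n := by exact_mod_cast h1
    linarith
  obtain ⟨p, hpA, hpF, hpw⟩ := hwp
  have hpM : p ∈ Mᶜ := fun h => hpA (hMsub h)
  have hneW : ∀ y ∈ A, y ∉ M → connectedComponentIn Mᶜ y ≠ connectedComponentIn Mᶜ w := by
    intro y hyA hyM he
    have hyM' : y ∈ Mᶜ := hyM
    apply hpF
    apply hsplit (connectedComponentIn Mᶜ y) isPreconnected_connectedComponentIn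
      (connectedComponentIn_subset _ _) y (mem_connectedComponentIn hyM') (hFA y hyA hyM)
    rw [he, ← hpw]
    exact mem_connectedComponentIn hpM
  have htwo : ∀ y ∉ M, connectedComponentIn Mᶜ y = connectedComponentIn Mᶜ u ∨
        connectedComponentIn Mᶜ y = connectedComponentIn Mᶜ w := by
    intro y hy
    obtain ⟨x, hxM, hx⟩ := comp_meets hMcl ⟨x1, hx1M⟩ hy
    obtain ⟨O1, hO1, hxO1, h1⟩ := hnb x hxM
    obtain ⟨O2, hO2, hxO2, h2⟩ := hu x hxM
    obtain ⟨O3, hO3, hxO3, h3⟩ := hw x hxM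
    obtain ⟨z, ⟨⟨hz1, hz2⟩, hz3⟩, hzQ⟩ := mem_closure_iff.1 hx (O1 ∩ O2 ∩ O3)
      ((hO1.inter hO2).inter hO3) ⟨⟨hxO1, hxO2⟩, hxO3⟩
    rw [connectedComponentIn_eq hzQ]
    have hzM : z ∉ M := connectedComponentIn_subset _ _ hzQ
    by_cases hzA : z ∈ A
    · left
      by_cases hzi : z ∈ interior A
      · exact h2 z ⟨hzi, hz2⟩
      · exact absurd (h1 ⟨⟨subset_closure hzA, hzi⟩, hz1⟩) hzM
    · exact Or.inr (h3 z ⟨hzA, hz3⟩)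
  refine ⟨hMcl, hMA, ⟨x1, hx1M⟩, u, huA, w, hwA, hneW u (interior_subset huA) (hinn huA), htwo,
    fun y hyA hyM => (htwo y hyM).resolve_right (hneW y hyA hyM), ?_, ?_⟩
  · intro x hx
    obtain ⟨O, S, hO, hxO, hS, hSc, hxS, h⟩ := inner_nhds hA (hMA hx)
    refine closure_mono ?_ hxS
    intro y hy
    have hyi := hS hy
    rw [← (htwo y (hinn hyi)).resolve_right (hneW y (interior_subset hyi) (hinn hyi))]
    exact mem_connectedComponentIn (hinn hyi)
  · intro x hx
    obtain ⟨O, hO, hxO, h⟩ := hw x hx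
    exact ⟨O, hO, hxO, fun y hyO hyA => h y ⟨hyA, hyO⟩⟩

lemma card_two {M : Set Sph4} {u w : Sph4} (hu : u ∉ M) (hw : w ∉ M)
    (hne : connectedComponentIn Mᶜ u ≠ connectedComponentIn Mᶜ w)
    (h : ∀ y ∉ M, connectedComponentIn Mᶜ y = connectedComponentIn Mᶜ u ∨
        connectedComponentIn Mᶜ y = connectedComponentIn Mᶜ w) :
    Nat.card (ConnectedComponents (Mᶜ : Set Sph4)) = 2 := by
  have key : ∀ a b : (Mᶜ : Set Sph4), ConnectedComponents.mk a = ConnectedComponents.mk b ↔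
      connectedComponentIn Mᶜ a.1 = connectedComponentIn Mᶜ b.1 := by
    intro a b
    rw [ConnectedComponents.coe_eq_coe, connectedComponentIn_eq_image a.2,
      connectedComponentIn_eq_image b.2]
    exact ((Set.image_injective.2 Subtype.val_injective).eq_iff).symm
  rw [Nat.card_eq_two_iff]
  refine ⟨ConnectedComponents.mk ⟨u, hu⟩, ConnectedComponents.mk ⟨w, hw⟩, ?_, ?_⟩
  · rw [Ne, key]
    exact hne
  · rw [eq_univ_iff_forall]
    intro c
    obtain ⟨y, rfl⟩ := ConnectedComponents.surjective_coe c
    rcases h y.1 y.2 with h | h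
    · exact Or.inl ((key _ _).2 h)
    · exact Or.inr ((key _ _).2 h)

lemma final_sc {A M : Set Sph4} (hA : IsClosed A) (hsc : SimplyConnectedSpace A)
    (hM : IsClosed M) (hMA : M ⊆ A) {u w : Sph4} (hu : u ∈ A) (huM : u ∉ M)
    (hne : connectedComponentIn Mᶜ u ≠ connectedComponentIn Mᶜ w)
    (h2 : ∀ y ∉ M, connectedComponentIn Mᶜ y = connectedComponentIn Mᶜ u ∨
        connectedComponentIn Mᶜ y = connectedComponentIn Mᶜ w)
    (hAU : ∀ y ∈ A, y ∉ M → connectedComponentIn Mᶜ y = connectedComponentIn Mᶜ u)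
    (hMcl : M ⊆ closure (connectedComponentIn Mᶜ u))
    (hout : ∀ x ∈ M, ∃ O, IsOpen O ∧ x ∈ O ∧ ∀ y ∈ O, y ∉ A →
        connectedComponentIn Mᶜ y = connectedComponentIn Mᶜ w) :
    SimplyConnectedSpace (closure (connectedComponentIn Mᶜ u)) := by
  have huM' : u ∈ Mᶜ := huM
  have hmem : ∀ y ∉ M, connectedComponentIn Mᶜ y = connectedComponentIn Mᶜ u →
      y ∈ connectedComponentIn Mᶜ u := fun y hy he => he ▸ mem_connectedComponentIn (F := Mᶜ) hy
  have hUo : IsOpen (connectedComponentIn Mᶜ u) := hM.isOpen_compl.connectedComponentIn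
  have hcl : closure (connectedComponentIn Mᶜ u) = connectedComponentIn Mᶜ u ∪ A := by
    apply Subset.antisymm
    · exact (closure_comp hM u).trans (union_subset_union_right _ hMA)
    · rintro y (hy | hy)
      · exact subset_closure hy
      · by_cases hyM : y ∈ M
        · exact hMcl hyM
        · exact subset_closure (hmem y hyM (hAU y hy hyM))
  have hnotU : ∀ y, connectedComponentIn Mᶜ y = connectedComponentIn Mᶜ w →
      y ∉ connectedComponentIn Mᶜ u := by
    intro y hy h
    exact hne ((connectedComponentIn_eq h).trans hy)
  have hUpc : IsPathConnected (connectedComponentIn Mᶜ u) :=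
    (hUo.isConnected_iff_isPathConnected).1 (isConnected_connectedComponentIn_iff.2 huM')
  have hApc : IsPathConnected A := isPathConnected_iff_pathConnectedSpace.2 inferInstance
  have hA'pc : IsPathConnected (closure (connectedComponentIn Mᶜ u)) := by
    rw [hcl]
    exact hUpc.union hApc ⟨u, mem_connectedComponentIn huM', hu⟩
  refine sc_of_grid (O := connectedComponentIn Mᶜ u)
    (X2 := interior ((connectedComponentIn Mᶜ u)ᶜ ∪ A)) hsc hA'pc ?_ hUo isOpen_interior
    subset_closure ?_ ?_
  · rw [hcl]; exact subset_union_right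
  · intro x
    by_cases hxU : x ∈ connectedComponentIn Mᶜ u
    · exact Or.inl hxU
    · right
      rw [mem_interior]
      by_cases hxM : x ∈ M
      · obtain ⟨O, hO, hxO, h⟩ := hout x hxM
        refine ⟨O, fun y hy => ?_, hO, hxO⟩
        by_cases hyA : y ∈ A
        · exact Or.inr hyA
        · exact Or.inl (hnotU y (h y hy hyA))
      · refine ⟨connectedComponentIn Mᶜ x, fun y hy => Or.inl (hnotU y ?_),
          hM.isOpen_compl.connectedComponentIn, mem_connectedComponentIn (F := Mᶜ) hxM⟩
        rw [← connectedComponentIn_eq hy]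
        exact (h2 x hxM).resolve_left fun he => hxU (hmem x hxM he)
  · intro x hx hx2
    rcases interior_subset hx2 with h | h
    · exact hMA ((closure_comp hM u hx).resolve_left h)
    · exact h

end Sub10

end

/-- If `A ⊆ S⁴` is a compact connected simply connected smooth 4-submanifold with
boundary and `M` is a connected component of `∂A`, then `S⁴ \ M` has exactly two
connected components, and the closure of the component containing the interior of `A`
is simply connected. -/
theorem stmt10 (A : Set Sph4) (hcpt : IsCompact A) (hconn : IsConnected A)
    (hsc : SimplyConnectedSpace A)
    (hman : ChartedSpace (EuclideanHalfSpace 4) A)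
    (M : Set Sph4) (hM : ∃ x ∈ frontier A, M = connectedComponentIn (frontier A) x) :
    Nat.card (ConnectedComponents (Mᶜ : Set Sph4)) = 2 ∧
    ∀ x ∈ interior A, x ∉ M →
      SimplyConnectedSpace (closure (connectedComponentIn Mᶜ x)) := by
  obtain ⟨x1, hx1, hMe⟩ := hM
  have hA : IsClosed A := hcpt.isClosed
  obtain ⟨hMcl, hMA, -, u, hu, w, hw, hne, h2, hAU, hcl, hout⟩ :=
    Sub10.main_facts hA hconn.isPreconnected hx1 hMe
  have hMsub : M ⊆ A := fun x hx => hA.frontier_subset (hMA hx)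
  have huM : u ∉ M := fun h => (hMA h).2 hu
  refine ⟨Sub10.card_two huM (fun h => hw (hMsub h)) hne h2, fun x hx hxM => ?_⟩
  rw [hAU x (interior_subset hx) hxM]
  exact Sub10.final_sc hA hsc hMcl hMsub (interior_subset hu) huM hne h2 hAU hcl hout
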